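/- arXiv:2604.19739 — 4 statements merged into one kernel-verified Lean document; each statement's English description precedes it below -/
import Mathlib

section
/- Let (X,d) be a quasi-metric space with triangular constant κ ≥ 1, let μ be a Borel measure making (X,d,μ) η-Ahlfors regular for some η > 0, and let ρ be the third order hypermetric induced by d. Let 0 < γ < 2η. Then for every p₁ > 1, p₂ > 1 and p₃ with 0 < 1/p₃ = 1/p₁ + 1/p₂ − (2η−γ)/η, there exists a constant C > 0 such that ‖T^γ(f,g)‖_{L^{p₃}(μ)} ≤ C ‖f‖_{L^{p₁}(μ)} ‖g‖_{L^{p₂}(μ)} for every pair f, g of nonnegative measurable functions on X. -/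
open MeasureTheory ENNReal

/-- The third order hypermetric induced by `d`:
`ρ(x,y,z) = inf_{u ∈ X} max {d(x,u), d(y,u), d(z,u)}`. -/
noncomputable def hyperRho {X : Type*} (d : X → X → ℝ) (x y z : X) : ℝ :=
  ⨅ u : X, max (d x u) (max (d y u) (d z u))

/-- `d` is a quasi-metric on `X` with triangular constant `κ`. -/
def IsQuasiMetric {X : Type*} (d : X → X → ℝ) (κ : ℝ) : Prop :=
  (∀ x y, 0 ≤ d x y) ∧ (∀ x y, (d x y = 0 ↔ x = y)) ∧ (∀ x y, d x y = d y x) ∧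
    (∀ x y z, d x z ≤ κ * (d x y + d y z))

/-- `(X,d,μ)` is `η`-Ahlfors regular with constants `a ≤ A`. -/
def IsAhlfors {X : Type*} [MeasurableSpace X] (d : X → X → ℝ) (μ : Measure X)
    (η a A : ℝ) : Prop :=
  ∀ x : X, ∀ r : ℝ, 0 < r →
    ENNReal.ofReal (a * r ^ η) ≤ μ {y | d x y < r} ∧
      μ {y | d x y < r} ≤ ENNReal.ofReal (A * r ^ η)

/-- The bilinear fractional integral operator
`T^γ(f,g)(x) = ∬ f(y) g(z) ρ(x,y,z)^{-γ} dμ(y) dμ(z)`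
(with the convention `0 ^ (-γ) = ∞` for `γ > 0`, as in `ENNReal.rpow`). -/
noncomputable def Tgamma {X : Type*} [MeasurableSpace X] (d : X → X → ℝ)
    (μ : Measure X) (γ : ℝ) (f g : X → ℝ≥0∞) (x : X) : ℝ≥0∞ :=
  ∫⁻ y, ∫⁻ z, f y * g z * (ENNReal.ofReal (hyperRho d x y z)) ^ (-γ) ∂μ ∂μ

/-- The linear fractional integral operator of order `β` in the `η`-dimensional
space `(X,d,μ)`: `I_β h(x) = ∫ h(y) d(x,y)^{β-η} dμ(y)`. -/
noncomputable def fracInt {X : Type*} [MeasurableSpace X] (d : X → X → ℝ)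
    (μ : Measure X) (β η : ℝ) (h : X → ℝ≥0∞) (x : X) : ℝ≥0∞ :=
  ∫⁻ y, h y * (ENNReal.ofReal (d x y)) ^ (β - η) ∂μ

/-- The `L^p(μ)` norm of a nonnegative function, `p` a real exponent. -/
noncomputable def lpNorm {X : Type*} [MeasurableSpace X] (μ : Measure X) (p : ℝ)
    (h : X → ℝ≥0∞) : ℝ≥0∞ :=
  (∫⁻ x, (h x) ^ p ∂μ) ^ (1 / p)

section HLS

lemma aux_rpow_anti {x y : ℝ≥0∞} {e : ℝ} (he : e ≤ 0) (h : x ≤ y) : y ^ e ≤ x ^ e := by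
  obtain ⟨e', rfl⟩ : ∃ e', e = -e' := ⟨-e, by ring⟩
  rw [ENNReal.rpow_neg, ENNReal.rpow_neg]
  exact ENNReal.inv_le_inv.2 (ENNReal.rpow_le_rpow h (by linarith))

variable {X : Type*} [MeasurableSpace X]

lemma aux_geom_ne_top (e : ℝ) (he : e < 0) : (∑' k : ℕ, ((2:ℝ≥0∞) ^ e) ^ k) ≠ ∞ := by
  rw [ENNReal.tsum_geometric]
  have h : (2:ℝ≥0∞) ^ e < 1 := ENNReal.rpow_lt_one_of_one_lt_of_neg (by norm_num) he
  simp only [ne_eq, ENNReal.inv_eq_top]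
  exact (tsub_pos_of_lt h).ne'

/-- weak type bound, normalised at level 1, large part -/
lemma aux_large (μ : Measure X) (V : X → ℝ≥0∞) (hV : Measurable V) (B : ℝ≥0∞) (hB : B ≠ ∞)
    (hw : ∀ t : ℝ≥0∞, t ≠ 0 → t ≠ ∞ → μ {y | t < V y} ≤ B / t) (s : ℝ) (hs0 : 0 < s) :
    ∫⁻ y, (if 1 ≤ V y then V y ^ s else 0) ∂μ
      ≤ B * (2 * 2 ^ s * ∑' k : ℕ, ((2:ℝ≥0∞) ^ (s - 1)) ^ k) := by
  have hfin : ∀ᵐ y ∂μ, V y ≠ ∞ := by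
    rw [ae_iff]
    have h1 : ∀ n : ℕ, μ {y | ¬ V y ≠ ∞} ≤ B / ((n : ℝ≥0∞) + 1) := fun n => by
      refine (measure_mono ?_).trans (hw (n + 1) (by positivity) (by finiteness))
      intro y hy
      simp only [ne_eq, not_not, Set.mem_ofPred_eq] at hy ⊢
      rw [hy]; finiteness
    have h2 : Filter.Tendsto (fun n : ℕ => B / ((n : ℝ≥0∞) + 1)) Filter.atTop (nhds 0) := by
      have := (ENNReal.tendsto_inv_nat_nhds_zero).comp (Filter.tendsto_add_atTop_nat 1)
      have := ENNReal.Tendsto.const_mul (a := B) this (Or.inr hB)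
      simpa [div_eq_mul_inv, Function.comp_def] using this
    exact le_antisymm (ge_of_tendsto' h2 h1) zero_le
  calc ∫⁻ y, (if 1 ≤ V y then V y ^ s else 0) ∂μ
      ≤ ∫⁻ y, ∑' k : ℕ, ({y | (2:ℝ≥0∞) ^ ((k:ℝ) - 1) < V y}.indicator
          (fun _ => ((2:ℝ≥0∞) ^ ((k:ℝ) + 1)) ^ s) y) ∂μ := by
        apply lintegral_mono_ae
        filter_upwards [hfin] with y hy
        split_ifs with h1
        · obtain ⟨k, hk1, hk2⟩ : ∃ k : ℕ, (2:ℝ≥0∞) ^ k ≤ V y ∧ V y < 2 ^ (k + 1) := by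
            lift V y to NNReal using hy with v hv
            obtain ⟨k, h⟩ := exists_nat_pow_near (y := (2 : NNReal)) (x := v) (by exact_mod_cast h1) (by norm_num)
            exact ⟨k, by exact_mod_cast h.1, by exact_mod_cast h.2⟩
          refine le_trans ?_ (ENNReal.le_tsum k)
          rw [Set.indicator_of_mem]
          · refine ENNReal.rpow_le_rpow ?_ hs0.le
            refine hk2.le.trans (le_of_eq ?_)
            rw [← ENNReal.rpow_natCast]; push_cast; rfl
          · refine lt_of_lt_of_le ?_ hk1
            rw [← ENNReal.rpow_natCast]
            exact ENNReal.rpow_lt_rpow_of_exponent_lt (by norm_num) (by norm_num) (by linarith)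
        · exact zero_le
    _ = ∑' k : ℕ, ((2:ℝ≥0∞) ^ ((k:ℝ) + 1)) ^ s * μ {y | (2:ℝ≥0∞) ^ ((k:ℝ) - 1) < V y} := by
        have hm : ∀ k : ℕ, MeasurableSet {y | (2:ℝ≥0∞) ^ ((k:ℝ) - 1) < V y} := fun k =>
          measurableSet_lt measurable_const hV
        rw [lintegral_tsum (fun k => (measurable_const.indicator (hm k)).aemeasurable)]
        congr 1; ext k
        rw [lintegral_indicator_const (hm k)]
    _ ≤ ∑' k : ℕ, B * (2 * 2 ^ s) * ((2:ℝ≥0∞) ^ (s - 1)) ^ k := by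
        refine ENNReal.tsum_le_tsum fun k => ?_
        calc _ ≤ ((2:ℝ≥0∞) ^ ((k:ℝ) + 1)) ^ s * (B / (2:ℝ≥0∞) ^ ((k:ℝ) - 1)) := by
              gcongr
              exact hw _ (by simp [ENNReal.rpow_eq_zero_iff]) (by simp [ENNReal.rpow_eq_top_iff])
          _ = _ := by
              rw [div_eq_mul_inv, ← ENNReal.rpow_neg, ← ENNReal.rpow_mul, ← ENNReal.rpow_natCast, ← ENNReal.rpow_mul]
              have e1 : (2:ℝ≥0∞) * 2 ^ s = 2 ^ (1 + s) := by
                rw [ENNReal.rpow_add _ _ (by norm_num) (by norm_num), ENNReal.rpow_one]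
              rw [e1, mul_left_comm, mul_assoc, ← ENNReal.rpow_add _ _ (by norm_num) (by norm_num), ← ENNReal.rpow_add _ _ (by norm_num) (by norm_num)]
              congr 2; ring
    _ = _ := by rw [ENNReal.tsum_mul_left, mul_assoc]

lemma aux_small (μ : Measure X) (V : X → ℝ≥0∞) (hV : Measurable V) (B : ℝ≥0∞)
    (hw : ∀ t : ℝ≥0∞, t ≠ 0 → t ≠ ∞ → μ {y | t < V y} ≤ B / t) (s : ℝ) (hs0 : 0 < s) :
    ∫⁻ y, (if V y ≤ 1 then V y ^ s else 0) ∂μ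
      ≤ B * (2 * 2 ^ s * ∑' k : ℕ, ((2:ℝ≥0∞) ^ (1 - s)) ^ k) := by
  calc ∫⁻ y, (if V y ≤ 1 then V y ^ s else 0) ∂μ
      ≤ ∫⁻ y, ∑' k : ℕ, ({y | (2:ℝ≥0∞) ^ (-(k:ℝ) - 1) < V y}.indicator
          (fun _ => ((2:ℝ≥0∞) ^ (-(k:ℝ) + 1)) ^ s) y) ∂μ := by
        apply lintegral_mono
        intro y
        dsimp only
        split_ifs with h1
        · by_cases h0 : V y = 0
          · rw [h0, ENNReal.zero_rpow_of_pos hs0]; exact zero_le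
          obtain ⟨k, hk1, hk2⟩ : ∃ k : ℕ, (2:ℝ≥0∞) ^ k ≤ (V y)⁻¹ ∧ (V y)⁻¹ < 2 ^ (k + 1) := by
            have h1' : 1 ≤ (V y)⁻¹ := ENNReal.one_le_inv.2 h1
            have hy : (V y)⁻¹ ≠ ∞ := ENNReal.inv_ne_top.2 h0
            lift (V y)⁻¹ to NNReal using hy with v hv
            obtain ⟨k, h⟩ := exists_nat_pow_near (y := (2 : NNReal)) (x := v) (by exact_mod_cast h1') (by norm_num)
            exact ⟨k, by exact_mod_cast h.1, by exact_mod_cast h.2⟩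
          refine le_trans ?_ (ENNReal.le_tsum k)
          rw [Set.indicator_of_mem]
          · refine ENNReal.rpow_le_rpow ?_ hs0.le
            have := ENNReal.le_inv_iff_le_inv.1 hk1
            refine this.trans ?_
            rw [← ENNReal.rpow_natCast, ← ENNReal.rpow_neg]
            exact ENNReal.rpow_le_rpow_of_exponent_le (by norm_num) (by linarith)
          · have := ENNReal.inv_lt_iff_inv_lt.1 hk2
            refine lt_of_le_of_lt (le_of_eq ?_) this
            rw [← ENNReal.rpow_natCast, ← ENNReal.rpow_neg]
            congr 1; push_cast; ring
        · exact zero_le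
    _ = ∑' k : ℕ, ((2:ℝ≥0∞) ^ (-(k:ℝ) + 1)) ^ s * μ {y | (2:ℝ≥0∞) ^ (-(k:ℝ) - 1) < V y} := by
        have hm : ∀ k : ℕ, MeasurableSet {y | (2:ℝ≥0∞) ^ (-(k:ℝ) - 1) < V y} := fun k =>
          measurableSet_lt measurable_const hV
        rw [lintegral_tsum (fun k => (measurable_const.indicator (hm k)).aemeasurable)]
        congr 1; ext k
        rw [lintegral_indicator_const (hm k)]
    _ ≤ ∑' k : ℕ, B * (2 * 2 ^ s) * ((2:ℝ≥0∞) ^ (1 - s)) ^ k := by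
        refine ENNReal.tsum_le_tsum fun k => ?_
        calc _ ≤ ((2:ℝ≥0∞) ^ (-(k:ℝ) + 1)) ^ s * (B / (2:ℝ≥0∞) ^ (-(k:ℝ) - 1)) := by
              gcongr
              exact hw _ (by simp [ENNReal.rpow_eq_zero_iff]) (by simp [ENNReal.rpow_eq_top_iff])
          _ = _ := by
              rw [div_eq_mul_inv, ← ENNReal.rpow_neg, ← ENNReal.rpow_mul, ← ENNReal.rpow_natCast, ← ENNReal.rpow_mul]
              have e1 : (2:ℝ≥0∞) * 2 ^ s = 2 ^ (1 + s) := by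
                rw [ENNReal.rpow_add _ _ (by norm_num) (by norm_num), ENNReal.rpow_one]
              rw [e1, mul_left_comm, mul_assoc, ← ENNReal.rpow_add _ _ (by norm_num) (by norm_num), ← ENNReal.rpow_add _ _ (by norm_num) (by norm_num)]
              congr 2; ring
    _ = _ := by rw [ENNReal.tsum_mul_left, mul_assoc]

lemma aux_scale (μ : Measure X) (V : X → ℝ≥0∞) (B : ℝ≥0∞)
    (hw : ∀ t : ℝ≥0∞, t ≠ 0 → t ≠ ∞ → μ {y | t < V y} ≤ B / t) (F : ℝ≥0∞) (hF0 : F ≠ 0) (hF : F ≠ ∞) :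
    ∀ t : ℝ≥0∞, t ≠ 0 → t ≠ ∞ → μ {y | t < V y / F} ≤ (B / F) / t := by
  intro t h0 ht
  have e : {y | t < V y / F} = {y | t * F < V y} := by
    ext y
    simp only [Set.mem_ofPred_eq]
    rw [ENNReal.lt_div_iff_mul_lt (Or.inl hF0) (Or.inl hF)]
  rw [e]
  refine (hw _ (mul_ne_zero h0 hF0) (ENNReal.mul_ne_top ht hF)).trans (le_of_eq ?_)
  rw [div_eq_mul_inv, div_eq_mul_inv, div_eq_mul_inv, ENNReal.mul_inv (Or.inl h0) (Or.inl ht)]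
  ring

/-- combined single variable bound -/
lemma aux_single (μ : Measure X) (V : X → ℝ≥0∞) (hV : Measurable V) (B : ℝ≥0∞) (hB : B ≠ ∞)
    (hw : ∀ t : ℝ≥0∞, t ≠ 0 → t ≠ ∞ → μ {y | t < V y} ≤ B / t)
    (a b c : ℝ) (ha : 0 < a) (hb : 0 < b) (hc : 0 < c) (habc : a + b + c = 2)
    (F : ℝ≥0∞) :
    ∫⁻ y, ((if F ≤ V y then F ^ (a + b) * V y ^ c else 0)
        + (if V y ≤ F then F ^ a * V y ^ (b + c) else 0)) ∂μ
      ≤ (B * (2 * 2 ^ c * ∑' k : ℕ, ((2:ℝ≥0∞) ^ (c - 1)) ^ k)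
        + B * (2 * 2 ^ (b + c) * ∑' k : ℕ, ((2:ℝ≥0∞) ^ (1 - (b + c))) ^ k) + 1) * F := by
  by_cases hF0 : F = 0
  · subst hF0
    simp [ENNReal.zero_rpow_of_pos, ha, add_pos ha hb]
  by_cases hF : F = ∞
  · subst hF
    rw [ENNReal.mul_top (by simp)]; exact le_top
  have hw' := aux_scale μ V B hw F hF0 hF
  have hV' : Measurable fun y => V y / F := hV.div_const F
  have hBF : B / F ≠ ∞ := ENNReal.div_ne_top hB hF0
  have h1 := aux_large μ _ hV' (B / F) hBF hw' c hc
  have h2 := aux_small μ _ hV' (B / F) hw' (b + c) (by linarith)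
  set S1 := (2 * 2 ^ c * ∑' k : ℕ, ((2:ℝ≥0∞) ^ (c - 1)) ^ k)
  set S2 := (2 * 2 ^ (b + c) * ∑' k : ℕ, ((2:ℝ≥0∞) ^ (1 - (b + c))) ^ k)
  have hVF : ∀ y, V y = F * (V y / F) := fun y => (ENNReal.mul_div_cancel hF0 hF).symm
  have key : ∀ y, ((if F ≤ V y then F ^ (a + b) * V y ^ c else 0)
        + (if V y ≤ F then F ^ a * V y ^ (b + c) else 0)) =
      F ^ (2:ℝ) * (if 1 ≤ V y / F then (V y / F) ^ c else 0)
      + F ^ (2:ℝ) * (if V y / F ≤ 1 then (V y / F) ^ (b + c) else 0) := by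
    intro y
    have i1 : 1 ≤ V y / F ↔ F ≤ V y := by
      rw [ENNReal.le_div_iff_mul_le (Or.inl hF0) (Or.inl hF), one_mul]
    have i2 : V y / F ≤ 1 ↔ V y ≤ F := by
      rw [ENNReal.div_le_iff_le_mul (Or.inl hF0) (Or.inl hF), one_mul]
    simp only [i1, i2, mul_ite, mul_zero]
    have e1 : F ^ (a + b) * V y ^ c = F ^ (2:ℝ) * (V y / F) ^ c := by
      conv_lhs => rw [hVF y]
      rw [ENNReal.mul_rpow_of_nonneg _ _ hc.le, ← mul_assoc, ← ENNReal.rpow_add _ _ hF0 hF, habc]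
    have e2 : F ^ a * V y ^ (b + c) = F ^ (2:ℝ) * (V y / F) ^ (b + c) := by
      conv_lhs => rw [hVF y]
      rw [ENNReal.mul_rpow_of_nonneg _ _ (by linarith), ← mul_assoc, ← ENNReal.rpow_add _ _ hF0 hF, ← add_assoc, habc]
    rw [e1, e2]
  simp_rw [key]
  have m1 : Measurable fun y => (if 1 ≤ V y / F then (V y / F) ^ c else 0) :=
    Measurable.ite (measurableSet_le measurable_const hV') (hV'.pow_const _) measurable_const
  have m2 : Measurable fun y => (if V y / F ≤ 1 then (V y / F) ^ (b + c) else 0) :=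
    Measurable.ite (measurableSet_le hV' measurable_const) (hV'.pow_const _) measurable_const
  rw [lintegral_add_left (m1.const_mul _), lintegral_const_mul _ m1, lintegral_const_mul _ m2]
  have hFF : F ^ (2:ℝ) * (B / F) = B * F := by
    rw [show (2:ℝ) = 1 + 1 by norm_num, ENNReal.rpow_add _ _ hF0 hF, ENNReal.rpow_one, mul_assoc,
      ENNReal.mul_div_cancel hF0 hF, mul_comm]
  calc _ ≤ F ^ (2:ℝ) * (B / F * S1) + F ^ (2:ℝ) * (B / F * S2) := by gcongr
    _ = (B * S1 + B * S2) * F := by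
      rw [← mul_assoc, ← mul_assoc (F ^ (2:ℝ)) (B / F) S2, hFF]; ring
    _ ≤ _ := mul_le_mul_left le_self_add F

lemma aux_pointwise (F H W : ℝ≥0∞) (a b c : ℝ) (ha : 0 < a) (hb : 0 < b) (hc : 0 < c)
    (ha1 : a < 1) (hb1 : b < 1) (habc : a + b + c = 2) :
    F ^ a * H ^ b * W ^ c ≤ F * H +
      ((if F ≤ W then F ^ (a + b) * W ^ c else 0) + (if W ≤ F then F ^ a * W ^ (b + c) else 0)) +
      ((if H ≤ W then H ^ (b + a) * W ^ c else 0) + (if W ≤ H then H ^ b * W ^ (a + c) else 0)) := by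
  have key : ∀ (F H : ℝ≥0∞) (a b : ℝ), 0 < a → 0 < b → H ≤ F → H ≤ W →
      F ^ a * H ^ b * W ^ c ≤ ((if F ≤ W then F ^ (a + b) * W ^ c else 0) + (if W ≤ F then F ^ a * W ^ (b + c) else 0)) := by
    intro F H a b ha hb h1 h2
    rcases le_total F W with h | h
    · rw [if_pos h]
      refine le_trans ?_ le_self_add
      rw [ENNReal.rpow_add_of_nonneg _ _ ha.le hb.le]
      gcongr
    · rw [if_pos h]
      refine le_trans ?_ le_add_self
      rw [ENNReal.rpow_add_of_nonneg _ _ hb.le hc.le, ← mul_assoc]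
      gcongr
  by_cases h : W ≤ F ∧ W ≤ H
  · refine le_trans ?_ (le_self_add.trans le_self_add)
    have e : W ^ c = W ^ (1 - a) * W ^ (1 - b) := by
      rw [← ENNReal.rpow_add_of_nonneg _ _ (by linarith) (by linarith)]; congr 1; linarith
    calc F ^ a * H ^ b * W ^ c ≤ F ^ a * H ^ b * (F ^ (1 - a) * H ^ (1 - b)) := by
          rw [e]
          have h3 : (0:ℝ) ≤ 1 - a := by linarith
          have h4 : (0:ℝ) ≤ 1 - b := by linarith
          gcongr
          · exact h.1
          · exact h.2
      _ = (F ^ a * F ^ (1 - a)) * (H ^ b * H ^ (1 - b)) := by ring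
      _ = F * H := by
          rw [← ENNReal.rpow_add_of_nonneg _ _ ha.le (by linarith), ← ENNReal.rpow_add_of_nonneg _ _ hb.le (by linarith)]
          simp
  · rcases le_total F H with hFH | hFH
    · have hFW : F ≤ W := by
        by_contra hh; push Not at hh; exact h ⟨hh.le, hh.le.trans hFH⟩
      refine le_trans ?_ le_add_self
      rw [mul_comm (F ^ a)]
      exact key H F b a hb ha hFH hFW
    · have hHW : H ≤ W := by
        by_contra hh; push Not at hh; exact h ⟨hh.le.trans hFH, hh.le⟩
      refine le_trans ?_ (le_add_self.trans le_self_add)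
      exact key F H a b ha hb hFH hHW

/-- The bilinear Hardy-Littlewood-Sobolev inequality, normalised. -/
lemma aux_bilinear (μ : Measure X) [SFinite μ] (W : X → X → ℝ≥0∞)
    (hW : Measurable (Function.uncurry W)) (hsymm : ∀ x y, W x y = W y x) (B : ℝ≥0∞) (hB : B ≠ ∞)
    (hw : ∀ x, ∀ t : ℝ≥0∞, t ≠ 0 → t ≠ ∞ → μ {y | t < W x y} ≤ B / t)
    (a b c : ℝ) (ha : 0 < a) (hb : 0 < b) (hc : 0 < c)
    (ha1 : a < 1) (hb1 : b < 1) (hc1 : c < 1) (habc : a + b + c = 2) :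
    ∃ C : ℝ≥0∞, C ≠ ∞ ∧ ∀ F H : X → ℝ≥0∞, Measurable F → Measurable H →
      ∫⁻ x, F x ∂μ ≤ 1 → ∫⁻ x, H x ∂μ ≤ 1 →
      ∫⁻ x, ∫⁻ y, H x ^ b * (F y ^ a * W x y ^ c) ∂μ ∂μ ≤ C := by
  have single := fun x => aux_single μ (W x) (hW.of_uncurry_left) B hB (hw x)
  obtain ⟨C1, hC1, h1⟩ : ∃ C : ℝ≥0∞, C ≠ ∞ ∧ ∀ x, ∀ F, ∫⁻ y, ((if F ≤ W x y then F ^ (a + b) * W x y ^ c else 0)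
        + (if W x y ≤ F then F ^ a * W x y ^ (b + c) else 0)) ∂μ ≤ C * F := by
    refine ⟨_, ?_, fun x F => single x a b c ha hb hc habc F⟩
    have := aux_geom_ne_top (c - 1) (by linarith)
    have := aux_geom_ne_top (1 - (b + c)) (by linarith)
    finiteness
  obtain ⟨C2, hC2, h2⟩ : ∃ C : ℝ≥0∞, C ≠ ∞ ∧ ∀ x, ∀ F, ∫⁻ y, ((if F ≤ W x y then F ^ (b + a) * W x y ^ c else 0)
        + (if W x y ≤ F then F ^ b * W x y ^ (a + c) else 0)) ∂μ ≤ C * F := by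
    refine ⟨_, ?_, fun x F => single x b a c hb ha hc (by linarith) F⟩
    have := aux_geom_ne_top (c - 1) (by linarith)
    have := aux_geom_ne_top (1 - (a + c)) (by linarith)
    finiteness
  refine ⟨1 + C1 + C2, by finiteness, fun F H hF hH iF iH => ?_⟩
  have mF : Measurable fun p : X × X => F p.2 := hF.comp measurable_snd
  have mH : Measurable fun p : X × X => H p.1 := hH.comp measurable_fst
  have mW : Measurable fun p : X × X => W p.1 p.2 := hW
  set P1 : X → X → ℝ≥0∞ := fun x y => F y * H x
  set P2 : X → X → ℝ≥0∞ := fun x y => ((if F y ≤ W x y then F y ^ (a + b) * W x y ^ c else 0) + (if W x y ≤ F y then F y ^ a * W x y ^ (b + c) else 0))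
  set P3 : X → X → ℝ≥0∞ := fun x y => ((if H x ≤ W x y then H x ^ (b + a) * W x y ^ c else 0) + (if W x y ≤ H x then H x ^ b * W x y ^ (a + c) else 0))
  have m1 : Measurable (Function.uncurry P1) := mF.mul mH
  have m2 : Measurable (Function.uncurry P2) :=
    (Measurable.ite (measurableSet_le mF mW) ((mF.pow_const _).mul (mW.pow_const _)) measurable_const).add
    (Measurable.ite (measurableSet_le mW mF) ((mF.pow_const _).mul (mW.pow_const _)) measurable_const)
  calc ∫⁻ x, ∫⁻ y, H x ^ b * (F y ^ a * W x y ^ c) ∂μ ∂μ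
      ≤ ∫⁻ x, ∫⁻ y, (P1 x y + P2 x y + P3 x y) ∂μ ∂μ := by
        refine lintegral_mono fun x => lintegral_mono fun y => ?_
        have := aux_pointwise (F y) (H x) (W x y) a b c ha hb hc ha1 hb1 habc
        refine le_trans (le_of_eq ?_) this
        ring
    _ = ∫⁻ x, ∫⁻ y, P1 x y ∂μ ∂μ + ∫⁻ x, ∫⁻ y, P2 x y ∂μ ∂μ + ∫⁻ x, ∫⁻ y, P3 x y ∂μ ∂μ := by
        rw [← lintegral_add_left m1.lintegral_prod_right, ← lintegral_add_left]
        · congr 1; ext x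
          rw [lintegral_add_left, lintegral_add_left]
          · exact m1.of_uncurry_left
          · exact (m1.of_uncurry_left).add (m2.of_uncurry_left)
        · exact m1.lintegral_prod_right.add m2.lintegral_prod_right
    _ ≤ 1 + C1 + C2 := by
        gcongr
        · calc ∫⁻ x, ∫⁻ y, F y * H x ∂μ ∂μ = ∫⁻ x, (∫⁻ y, F y ∂μ) * H x ∂μ := by
                congr 1; ext x; rw [lintegral_mul_const _ hF]
            _ = (∫⁻ y, F y ∂μ) * ∫⁻ x, H x ∂μ := lintegral_const_mul _ hH
            _ ≤ 1 * 1 := by gcongr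
            _ = 1 := one_mul 1
        · rw [lintegral_lintegral_swap m2.aemeasurable]
          calc _ ≤ ∫⁻ y, C1 * F y ∂μ := by
                refine lintegral_mono fun y => ?_
                refine le_trans (le_of_eq ?_) (h1 y (F y))
                simp only [P2, hsymm _ y]
            _ = C1 * ∫⁻ y, F y ∂μ := lintegral_const_mul _ hF
            _ ≤ C1 * 1 := by gcongr
            _ = C1 := mul_one _
        · calc _ ≤ ∫⁻ x, C2 * H x ∂μ := lintegral_mono fun x => h2 x (H x)
            _ = C2 * ∫⁻ y, H y ∂μ := lintegral_const_mul _ hH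
            _ ≤ C2 * 1 := by gcongr
            _ = C2 := mul_one _

/-- Linear fractional integration. -/
lemma aux_frac (μ : Measure X) [SigmaFinite μ] (W : X → X → ℝ≥0∞)
    (hW : Measurable (Function.uncurry W)) (hsymm : ∀ x y, W x y = W y x) (B : ℝ≥0∞) (hB : B ≠ ∞)
    (hw : ∀ x, ∀ t : ℝ≥0∞, t ≠ 0 → t ≠ ∞ → μ {y | t < W x y} ≤ B / t)
    (p q c : ℝ) (hp : 1 < p) (hq : 1 < q) (hc : 0 < c) (hc1 : c < 1)
    (hpq : 1 / p + (1 - 1 / q) + c = 2) :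
    ∃ C : ℝ≥0∞, C ≠ ∞ ∧ ∀ f : X → ℝ≥0∞, Measurable f →
      _root_.lpNorm μ q (fun x => ∫⁻ y, f y * W x y ^ c ∂μ) ≤ C * _root_.lpNorm μ p f := by
  have hp0 : 0 < p := by linarith
  have hq0 : 0 < q := by linarith
  have hp1 : 1 / p < 1 := by rw [div_lt_one hp0]; exact hp
  have hq1 : 1 / q < 1 := by rw [div_lt_one hq0]; exact hq
  have hpi : 0 < 1 / p := by positivity
  have hqi : 0 < 1 / q := by positivity
  obtain ⟨C, hC, hbil⟩ := aux_bilinear μ W hW hsymm B hB hw (1 / p) (1 - 1 / q) c hpi (by linarith) hc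
    hp1 (by linarith) hc1 hpq
  refine ⟨C + 1, by finiteness, fun f hf => ?_⟩
  unfold _root_.lpNorm
  set T : X → ℝ≥0∞ := fun x => ∫⁻ y, f y * W x y ^ c ∂μ with hT
  have mT : Measurable T := by
    refine Measurable.lintegral_prod_right' (f := fun p : X × X => f p.2 * W p.1 p.2 ^ c) ?_
    exact (hf.comp measurable_snd).mul (hW.pow_const _)
  set N := ∫⁻ x, f x ^ p ∂μ with hN
  by_cases hN0 : N = 0
  · have h0 : ∀ᵐ x ∂μ, f x = 0 := by
      have := (lintegral_eq_zero_iff (hf.pow_const p)).1 hN0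
      filter_upwards [this] with x hx
      simpa [hp0, hp0.not_gt] using hx
    have hT0 : ∀ x, T x = 0 := by
      intro x
      rw [hT]
      simp only
      rw [lintegral_congr_ae (g := fun _ => 0), lintegral_zero]
      filter_upwards [h0] with y hy
      simp [hy]
    simp [hT0, hq0]
  by_cases hNt : N = ∞
  · rw [hNt, ENNReal.top_rpow_of_pos hpi, ENNReal.mul_top (by simp)]; exact le_top
  -- truncation
  set G : ℕ → X → ℝ≥0∞ := fun n => (spanningSets μ n).indicator (fun x => min (T x) n) with hG
  have mG : ∀ n, Measurable (G n) := fun n =>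
    (mT.min measurable_const).indicator (measurableSet_spanningSets μ n)
  have Gle : ∀ n x, G n x ≤ T x := fun n x => by
    refine (Set.indicator_le_self' (fun _ _ => zero_le) x).trans (min_le_left _ _)
  have Gmono : Monotone G := by
    intro m n hmn x
    refine (Set.indicator_le_indicator_of_subset (monotone_spanningSets μ hmn) (fun _ => zero_le) x).trans ?_
    refine Set.indicator_le_indicator ?_
    exact min_le_min_left _ (by exact_mod_cast hmn)
  have Gsup : ∀ x, ⨆ n, G n x = T x := by
    intro x
    refine le_antisymm (iSup_le fun n => Gle n x) ?_
    refine le_of_forall_lt fun r hr => ?_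
    obtain ⟨n, hn⟩ := ENNReal.exists_nat_gt (ne_top_of_lt hr)
    have hx := mem_spanningSetsIndex μ x
    refine lt_of_lt_of_le ?_ (le_iSup _ (max n (spanningSetsIndex μ x)))
    rw [hG]
    simp only
    rw [Set.indicator_of_mem (monotone_spanningSets μ (le_max_right _ _) hx)]
    refine lt_min hr (hn.trans_le ?_)
    exact_mod_cast le_max_left _ _
  have bound : ∀ n, ∫⁻ x, G n x ^ q ∂μ ≤ (C * N ^ (1 / p)) ^ q := by
    intro n
    set S := ∫⁻ x, G n x ^ q ∂μ with hS
    by_cases hS0 : S = 0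
    · rw [hS0]; exact zero_le
    have hSt : S ≠ ∞ := by
      have : S ≤ ∫⁻ x, (spanningSets μ n).indicator (fun _ => (n : ℝ≥0∞) ^ q) x ∂μ := by
        refine lintegral_mono fun x => ?_
        by_cases hx : x ∈ spanningSets μ n
        · simp only [hG, Set.indicator_of_mem hx]
          exact ENNReal.rpow_le_rpow (min_le_right _ _) hq0.le
        · simp [hG, Set.indicator_of_notMem hx, hq0]
      refine ne_top_of_le_ne_top ?_ this
      rw [lintegral_indicator_const (measurableSet_spanningSets μ n)]
      have := (measure_spanningSets_lt_top μ n).ne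
      exact ENNReal.mul_ne_top (ENNReal.rpow_ne_top_of_nonneg hq0.le (by simp)) this
    have h := hbil (fun x => f x ^ p / N) (fun x => G n x ^ q / S) ((hf.pow_const p).div_const N)
      (((mG n).pow_const q).div_const S)
      (by simp_rw [div_eq_mul_inv]; rw [lintegral_mul_const _ (hf.pow_const p), ENNReal.mul_inv_cancel hN0 hNt])
      (by simp_rw [div_eq_mul_inv]; rw [lintegral_mul_const _ ((mG n).pow_const q), ENNReal.mul_inv_cancel hS0 hSt])
    have e1 : ∀ y, (f y ^ p / N) ^ (1 / p) = f y * (N ^ (1 / p))⁻¹ := fun y => by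
      rw [ENNReal.div_rpow_of_nonneg _ _ hpi.le, ← ENNReal.rpow_mul, mul_one_div_cancel hp0.ne', ENNReal.rpow_one, div_eq_mul_inv]
    have e2 : ∀ y, (G n y ^ q / S) ^ (1 - 1 / q) = G n y ^ (q - 1) * (S ^ (1 - 1 / q))⁻¹ := fun y => by
      rw [ENNReal.div_rpow_of_nonneg _ _ (by linarith), ← ENNReal.rpow_mul, div_eq_mul_inv]
      congr 2; field_simp
    have e3 : ∫⁻ x, ∫⁻ y, (G n x ^ q / S) ^ (1 - 1 / q) * ((f y ^ p / N) ^ (1 / p) * W x y ^ c) ∂μ ∂μ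
        = (∫⁻ x, G n x ^ (q - 1) * T x ∂μ) * ((S ^ (1 - 1 / q))⁻¹ * (N ^ (1 / p))⁻¹) := by
      have mGT : Measurable fun x => G n x ^ (q - 1) * T x := ((mG n).pow_const _).mul mT
      rw [← lintegral_mul_const _ mGT]
      congr 1; ext x
      simp_rw [e1, e2]
      have : ∀ y, G n x ^ (q - 1) * (S ^ (1 - 1 / q))⁻¹ * (f y * (N ^ (1 / p))⁻¹ * W x y ^ c)
        = (G n x ^ (q - 1) * (S ^ (1 - 1 / q))⁻¹ * (N ^ (1 / p))⁻¹) * (f y * W x y ^ c) := fun y => by ring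
      simp_rw [this]
      have mfW : Measurable fun y => f y * W x y ^ c := hf.mul (hW.of_uncurry_left.pow_const _)
      rw [lintegral_const_mul _ mfW]
      change G n x ^ (q - 1) * (S ^ (1 - 1 / q))⁻¹ * (N ^ (1 / p))⁻¹ * T x = _
      ring
    rw [e3] at h
    have e4 : S ≤ ∫⁻ x, G n x ^ (q - 1) * T x ∂μ := by
      refine lintegral_mono fun x => ?_
      calc G n x ^ q = G n x ^ (q - 1) * G n x ^ (1:ℝ) := by
            rw [← ENNReal.rpow_add_of_nonneg _ _ (by linarith) (by norm_num)]; congr 1; ring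
        _ ≤ _ := by rw [ENNReal.rpow_one]; gcongr; exact Gle n x
    have hNp0 : N ^ (1 / p) ≠ 0 := by simp [ENNReal.rpow_eq_zero_iff, hN0, hNt]
    have hNpt : N ^ (1 / p) ≠ ∞ := ENNReal.rpow_ne_top_of_nonneg hpi.le hNt
    have e5 : S ^ (1 / q) ≤ C * N ^ (1 / p) := by
      rw [← ENNReal.div_le_iff_le_mul (Or.inl hNp0) (Or.inl hNpt)]
      refine le_trans ?_ h
      have : S ^ (1 / q) = S * (S ^ (1 - 1 / q))⁻¹ := by
        rw [← ENNReal.rpow_neg]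
        conv_rhs => enter [1]; rw [← ENNReal.rpow_one S]
        rw [← ENNReal.rpow_add _ _ hS0 hSt]; congr 1; ring
      rw [this, div_eq_mul_inv, mul_assoc]
      gcongr
    calc S = (S ^ (1 / q)) ^ q := by
          rw [← ENNReal.rpow_mul, one_div_mul_cancel hq0.ne', ENNReal.rpow_one]
      _ ≤ _ := ENNReal.rpow_le_rpow e5 hq0.le
  have lim : ∫⁻ x, T x ^ q ∂μ ≤ (C * N ^ (1 / p)) ^ q := by
    have : ∀ x, T x ^ q = ⨆ n, G n x ^ q := fun x => by
      rw [← Gsup x]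
      exact (ENNReal.orderIsoRpow q hq0).map_iSup _
    simp_rw [this]
    rw [lintegral_iSup (fun n => (mG n).pow_const q)]
    · exact iSup_le bound
    · intro m n hmn x
      exact ENNReal.rpow_le_rpow (Gmono hmn x) hq0.le
  calc (∫⁻ x, T x ^ q ∂μ) ^ (1 / q) ≤ ((C * N ^ (1 / p)) ^ q) ^ (1 / q) :=
        ENNReal.rpow_le_rpow lim hqi.le
    _ = C * N ^ (1 / p) := by
        rw [← ENNReal.rpow_mul, mul_one_div_cancel hq0.ne', ENNReal.rpow_one]
    _ ≤ _ := by gcongr; exact le_self_add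

end HLS

lemma aux_rho {X : Type*} (d : X → X → ℝ) (κ : ℝ) (hκ : 1 ≤ κ) (hqm : IsQuasiMetric d κ) (x y z : X) :
    d x y / (2 * κ) ≤ hyperRho d x y z ∧ d x z / (2 * κ) ≤ hyperRho d x y z := by
  obtain ⟨h0, _, hs, ht⟩ := hqm
  have : Nonempty X := ⟨x⟩
  have hk : 0 < 2 * κ := by linarith
  constructor
  · refine le_ciInf fun u => ?_
    rw [div_le_iff₀ hk]
    have h1 := ht x u y
    rw [hs u y] at h1
    have h2 : d x u ≤ max (d x u) (max (d y u) (d z u)) := le_max_left _ _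
    have h3 : d y u ≤ max (d x u) (max (d y u) (d z u)) := (le_max_left _ _).trans (le_max_right _ _)
    nlinarith
  · refine le_ciInf fun u => ?_
    rw [div_le_iff₀ hk]
    have h1 := ht x u z
    rw [hs u z] at h1
    have h2 : d x u ≤ max (d x u) (max (d y u) (d z u)) := le_max_left _ _
    have h3 : d z u ≤ max (d x u) (max (d y u) (d z u)) := (le_max_right _ _).trans (le_max_right _ _)
    nlinarith

lemma aux_sigmaFinite {X : Type*} [MeasurableSpace X] (d : X → X → ℝ) (μ : Measure X) (η a A : ℝ)
    (hAhl : IsAhlfors d μ η a A) : SigmaFinite μ := by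
  rcases isEmpty_or_nonempty X with h | ⟨⟨x0⟩⟩
  · rw [Measure.eq_zero_of_isEmpty μ]; infer_instance
  · refine ⟨⟨⟨fun n => {y | d x0 y < n + 1}, fun _ => trivial, fun n => ?_, ?_⟩⟩⟩
    · exact ((hAhl x0 (n + 1) (by positivity)).2).trans_lt ENNReal.ofReal_lt_top
    · ext y
      simp only [Set.mem_iUnion, Set.mem_ofPred_eq, Set.mem_univ, iff_true]
      obtain ⟨n, hn⟩ := exists_nat_gt (d x0 y)
      exact ⟨n, by linarith⟩

lemma aux_weak {X : Type*} [MeasurableSpace X] (d : X → X → ℝ) (κ : ℝ) (hκ : 1 ≤ κ)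
    (μ : Measure X) (η : ℝ) (hη : 0 < η) (a A : ℝ) (hA : 0 < A)
    (hAhl : IsAhlfors d μ η a A) (x : X) (t : ℝ≥0∞) (h0 : t ≠ 0) (ht : t ≠ ∞) :
    μ {y | t < ENNReal.ofReal (d x y / (2 * κ)) ^ (-η)} ≤ ENNReal.ofReal (A * (2 * κ) ^ η) / t := by
  have hk : 0 < 2 * κ := by linarith
  have ht0 : 0 < t.toReal := ENNReal.toReal_pos h0 ht
  set s := t.toReal with hs
  have hts : t = ENNReal.ofReal s := (ENNReal.ofReal_toReal ht).symm
  have hr : 0 < 2 * κ * s ^ (-1 / η) := by positivity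
  refine (measure_mono ?_).trans ((hAhl x _ hr).2.trans (le_of_eq ?_))
  · intro y hy
    simp only [Set.mem_ofPred_eq] at hy ⊢
    by_contra hh
    push Not at hh
    have h1 : s ^ (-1 / η) ≤ d x y / (2 * κ) := by
      rw [le_div_iff₀ hk]; linarith
    have h2 : ENNReal.ofReal (d x y / (2 * κ)) ^ (-η) ≤ ENNReal.ofReal (s ^ (-1 / η)) ^ (-η) :=
      aux_rpow_anti (by linarith) (ENNReal.ofReal_le_ofReal h1)
    rw [← ENNReal.ofReal_rpow_of_pos ht0, ← hts, ← ENNReal.rpow_mul,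
      show -1 / η * -η = 1 by field_simp, ENNReal.rpow_one] at h2
    exact absurd hy (not_lt.2 h2)
  · rw [hts, ← ENNReal.ofReal_div_of_pos ht0]
    congr 1
    rw [Real.mul_rpow hk.le (by positivity), ← Real.rpow_mul ht0.le, show -1 / η * η = -1 by field_simp,
      Real.rpow_neg_one]
    ring

/-- Boundedness of the bilinear fractional integral operator `T^γ` induced by the
third order hypermetric on an `η`-Ahlfors regular quasi-metric measure space. -/
theorem statement0 {X : Type*} [MeasurableSpace X]
    (d : X → X → ℝ) (κ : ℝ) (hκ : 1 ≤ κ) (hqm : IsQuasiMetric d κ)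
    (hd_meas : Measurable fun p : X × X => d p.1 p.2)
    (μ : Measure X) (η : ℝ) (hη : 0 < η)
    (a A : ℝ) (ha : 0 < a) (haA : a ≤ A) (hAhl : IsAhlfors d μ η a A)
    (γ : ℝ) (hγ0 : 0 < γ) (hγ2η : γ < 2 * η)
    (p₁ p₂ p₃ : ℝ) (hp₁ : 1 < p₁) (hp₂ : 1 < p₂)
    (hp₃pos : 0 < 1 / p₃)
    (hp₃ : 1 / p₃ = 1 / p₁ + 1 / p₂ - (2 * η - γ) / η) :
    ∃ C : ℝ, 0 < C ∧ ∀ f g : X → ℝ≥0∞, Measurable f → Measurable g →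
      lpNorm μ p₃ (Tgamma d μ γ f g) ≤
        ENNReal.ofReal C * lpNorm μ p₁ f * lpNorm μ p₂ g := by
  have hp₁0 : 0 < p₁ := by linarith
  have hp₂0 : 0 < p₂ := by linarith
  have hp₃0 : 0 < p₃ := by simpa using hp₃pos
  have := aux_sigmaFinite d μ η a A hAhl
  have hA : 0 < A := by linarith
  have hi1 : 0 < 1 / p₁ := by positivity
  have hi2 : 0 < 1 / p₂ := by positivity
  have hi1' : 1 / p₁ < 1 := by rw [div_lt_one hp₁0]; exact hp₁
  have hi2' : 1 / p₂ < 1 := by rw [div_lt_one hp₂0]; exact hp₂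
  -- split the exponent
  obtain ⟨t, ht0, ht1, ht⟩ : ∃ t : ℝ, 0 < t ∧ t < 1 ∧ t * (1 / p₁ + 1 / p₂) = (2 * η - γ) / η := by
    have hpos : 0 < (2 * η - γ) / η := div_pos (by linarith) hη
    have hsum : 0 < 1 / p₁ + 1 / p₂ := by linarith
    refine ⟨((2 * η - γ) / η) / (1 / p₁ + 1 / p₂), div_pos hpos hsum, ?_, ?_⟩
    · rw [div_lt_one hsum]; linarith
    · field_simp
  have hexp : ∀ p : ℝ, 1 < p → 1 < p / (1 - t) ∧ 0 < 1 - t / p ∧ 1 - t / p < 1 ∧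
      1 / (p / (1 - t)) = (1 - t) * (1 / p) ∧
      1 / p + (1 - 1 / (p / (1 - t))) + (1 - t / p) = 2 := by
    intro p hp
    have hp0 : 0 < p := by linarith
    have h1t : 0 < 1 - t := by linarith
    refine ⟨?_, ?_, ?_, ?_, ?_⟩
    · rw [lt_div_iff₀ h1t]; linarith
    · have : t / p < 1 := by rw [div_lt_one hp0]; linarith
      linarith
    · have : 0 < t / p := by positivity
      linarith
    · field_simp
    · field_simp; ring
  obtain ⟨q1, c1, c1', iq1, s1⟩ := hexp p₁ hp₁
  obtain ⟨q2, c2, c2', iq2, s2⟩ := hexp p₂ hp₂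
  set W : X → X → ℝ≥0∞ := fun x y => ENNReal.ofReal (d x y / (2 * κ)) ^ (-η) with hWdef
  have hW : Measurable (Function.uncurry W) :=
    ((hd_meas.div_const (2 * κ)).ennreal_ofReal).pow_const (-η)
  have hsymm : ∀ x y, W x y = W y x := fun x y => by simp only [hWdef, hqm.2.2.1 x y]
  have hweak := aux_weak d κ hκ μ η hη a A hA hAhl
  obtain ⟨C₁, hC₁, H₁⟩ := aux_frac μ W hW hsymm _ ENNReal.ofReal_ne_top hweak p₁ _ _ hp₁ q1 c1 c1' s1
  obtain ⟨C₂, hC₂, H₂⟩ := aux_frac μ W hW hsymm _ ENNReal.ofReal_ne_top hweak p₂ _ _ hp₂ q2 c2 c2' s2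
  have hCC : C₁ * C₂ ≠ ∞ := ENNReal.mul_ne_top hC₁ hC₂
  refine ⟨(C₁ * C₂).toReal + 1, by positivity, fun f g hf hg => ?_⟩
  have hle : C₁ * C₂ ≤ ENNReal.ofReal ((C₁ * C₂).toReal + 1) := by
    rw [← ENNReal.ofReal_toReal hCC]
    exact ENNReal.ofReal_le_ofReal (by rw [ENNReal.ofReal_toReal hCC]; linarith)
  set T₁ : X → ℝ≥0∞ := fun x => ∫⁻ y, f y * W x y ^ (1 - t / p₁) ∂μ with hT₁
  set T₂ : X → ℝ≥0∞ := fun x => ∫⁻ y, g y * W x y ^ (1 - t / p₂) ∂μ with hT₂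
  have mT₁ : Measurable T₁ := by
    refine Measurable.lintegral_prod_right' (f := fun p : X × X => f p.2 * W p.1 p.2 ^ (1 - t / p₁)) ?_
    exact (hf.comp measurable_snd).mul (hW.pow_const _)
  have mT₂ : Measurable T₂ := by
    refine Measurable.lintegral_prod_right' (f := fun p : X × X => g p.2 * W p.1 p.2 ^ (1 - t / p₂)) ?_
    exact (hg.comp measurable_snd).mul (hW.pow_const _)
  have hγ : -γ = -η * ((1 - t / p₁) + (1 - t / p₂)) := by
    have h1 : t / p₁ + t / p₂ = (2 * η - γ) / η := by rw [← ht]; ring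
    have h2 : η * (t / p₁ + t / p₂) = 2 * η - γ := by rw [h1]; field_simp
    linarith
  have hpt : ∀ x, Tgamma d μ γ f g x ≤ T₁ x * T₂ x := by
    intro x
    have mf : Measurable fun y => f y * W x y ^ (1 - t / p₁) :=
      hf.mul (hW.of_uncurry_left.pow_const _)
    have mg : Measurable fun y => g y * W x y ^ (1 - t / p₂) :=
      hg.mul (hW.of_uncurry_left.pow_const _)
    calc Tgamma d μ γ f g x
        ≤ ∫⁻ y, ∫⁻ z, (f y * W x y ^ (1 - t / p₁)) * (g z * W x z ^ (1 - t / p₂)) ∂μ ∂μ := by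
          refine lintegral_mono fun y => lintegral_mono fun z => ?_
          obtain ⟨r1, r2⟩ := aux_rho d κ hκ hqm x y z
          have k1 : ENNReal.ofReal (hyperRho d x y z) ^ (-η) ≤ W x y :=
            aux_rpow_anti (by linarith) (ENNReal.ofReal_le_ofReal r1)
          have k2 : ENNReal.ofReal (hyperRho d x y z) ^ (-η) ≤ W x z :=
            aux_rpow_anti (by linarith) (ENNReal.ofReal_le_ofReal r2)
          calc f y * g z * ENNReal.ofReal (hyperRho d x y z) ^ (-γ)
              ≤ f y * g z * (W x y ^ (1 - t / p₁) * W x z ^ (1 - t / p₂)) := by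
                rw [hγ, ENNReal.rpow_mul, ENNReal.rpow_add_of_nonneg _ _ c1.le c2.le]
                gcongr
            _ = _ := by ring
      _ = ∫⁻ y, (f y * W x y ^ (1 - t / p₁)) * T₂ x ∂μ := by
          congr 1; ext y
          rw [lintegral_const_mul _ mg]
      _ = T₁ x * T₂ x := lintegral_mul_const _ mf
  have hsumq : 1 / p₃ = 1 / (p₁ / (1 - t)) + 1 / (p₂ / (1 - t)) := by
    rw [iq1, iq2, hp₃, ← ht]; ring
  have hlt : p₃ < p₁ / (1 - t) := by
    have h2 : 0 < 1 / (p₂ / (1 - t)) := by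
      have : 0 < p₂ / (1 - t) := by linarith
      positivity
    exact lt_of_one_div_lt_one_div (by linarith) (by linarith)
  calc _root_.lpNorm μ p₃ (Tgamma d μ γ f g)
      ≤ (∫⁻ x, (T₁ * T₂) x ^ p₃ ∂μ) ^ (1 / p₃) := by
        refine ENNReal.rpow_le_rpow (lintegral_mono fun x => ?_) hp₃pos.le
        exact ENNReal.rpow_le_rpow (hpt x) hp₃0.le
    _ ≤ _root_.lpNorm μ (p₁ / (1 - t)) T₁ * _root_.lpNorm μ (p₂ / (1 - t)) T₂ :=
        ENNReal.lintegral_Lp_mul_le_Lq_mul_Lr hp₃0 hlt hsumq μ mT₁.aemeasurable mT₂.aemeasurable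
    _ ≤ (C₁ * _root_.lpNorm μ p₁ f) * (C₂ * _root_.lpNorm μ p₂ g) := mul_le_mul' (H₁ f hf) (H₂ g hg)
    _ = (C₁ * C₂) * _root_.lpNorm μ p₁ f * _root_.lpNorm μ p₂ g := by ring
    _ ≤ _ := by gcongr
end

section
/- Let (X,d,μ) be an η-Ahlfors regular quasi-metric measure space with η > 0 and triangular constant κ ≥ 1, let 0 < γ < 2η and set σ = (2η−γ)/(2η). Suppose p₁, p₂, p₃ satisfy σ < 1/p₁ < 1, σ < 1/p₂ < 1 and 1/p₃ = 1/p₁ + 1/p₂ − 2σ. Then there exists C > 0 such that ‖(I_{η−γ/2}f)·(I_{η−γ/2}g)‖_{L^{p₃}(μ)} ≤ C ‖f‖_{L^{p₁}(μ)} ‖g‖_{L^{p₂}(μ)} for every f ∈ L^{p₁}(X,μ) and g ∈ L^{p₂}(X,μ) nonnegative. -/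
open MeasureTheory ENNReal

lemma aux_dyad (w : ℝ≥0∞) (h1 : 1 ≤ w) (h2 : w ≠ ⊤) :
    ∃ k : ℕ, (2:ℝ≥0∞) ^ k ≤ w ∧ w ≤ 2 ^ (k+1) := by
  lift w to NNReal using h2
  have h1' : (1:NNReal) ≤ w := by exact_mod_cast h1
  obtain ⟨k, hk, hk'⟩ := exists_nat_pow_near h1' (by norm_num : (1:NNReal) < 2)
  exact ⟨k, by exact_mod_cast hk, by exact_mod_cast hk'.le⟩

/-- geometric constant -/
lemma aux_geom (u : ℝ) (hu : u < 0) : ∑' k : ℕ, ((2:ℝ≥0∞) ^ k) ^ u ≠ ⊤ := by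
  have : ∀ k : ℕ, ((2:ℝ≥0∞) ^ k) ^ u = ((2:ℝ≥0∞) ^ u) ^ k := by
    intro k
    rw [← ENNReal.rpow_natCast, ← ENNReal.rpow_mul, mul_comm, ENNReal.rpow_mul, ENNReal.rpow_natCast]
  simp_rw [this, ENNReal.tsum_geometric]
  have : (2:ℝ≥0∞) ^ u < 1 := ENNReal.rpow_lt_one_of_one_lt_of_neg (by norm_num) hu
  simp [this, tsub_eq_zero_iff_le]

lemma aux_K1 {X : Type*} [MeasurableSpace X] (μ : Measure X) (s : ℝ) (hs0 : 0 < s) (hs1 : s < 1)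
    (w : X → ℝ≥0∞) (hwm : Measurable w) (B : ℝ≥0∞)
    (hw : ∀ τ : ℝ≥0∞, τ ≠ 0 → τ ≠ ⊤ → μ {x | τ ≤ w x} ≤ B / τ) :
    ∫⁻ x, (if 1 ≤ w x then w x ^ s else 0) ∂μ
      ≤ (2 ^ s * ∑' k : ℕ, ((2:ℝ≥0∞) ^ k) ^ (s - 1)) * B := by
  have hpt : ∀ x, (if 1 ≤ w x then w x ^ s else 0) ≤
      ∑' k : ℕ, {x | (2:ℝ≥0∞) ^ k ≤ w x}.indicator (fun _ => ((2:ℝ≥0∞) ^ (k+1)) ^ s) x := by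
    intro x
    split_ifs with h
    · by_cases ht : w x = ⊤
      · have : (⊤ : ℝ≥0∞) ≤ ∑' k : ℕ, {x | (2:ℝ≥0∞) ^ k ≤ w x}.indicator
            (fun _ => ((2:ℝ≥0∞) ^ (k+1)) ^ s) x := by
          rw [← ENNReal.tsum_const_eq_top_of_ne_zero (α := ℕ) (c := 1) one_ne_zero]
          refine ENNReal.tsum_le_tsum fun k => ?_
          rw [Set.indicator_of_mem (by simp [ht])]
          refine ENNReal.one_le_rpow ?_ hs0
          exact one_le_pow_of_one_le' (by norm_num) _
        exact le_top.trans this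
      · obtain ⟨k, hk, hk'⟩ := aux_dyad _ h ht
        refine le_trans ?_ (ENNReal.le_tsum k)
        rw [Set.indicator_of_mem (by exact hk)]
        exact ENNReal.rpow_le_rpow hk' hs0.le
    · simp
  refine (lintegral_mono hpt).trans ?_
  rw [lintegral_tsum (fun k => (measurable_const.indicator
    (measurableSet_le measurable_const hwm)).aemeasurable)]
  rw [← ENNReal.tsum_mul_left, ← ENNReal.tsum_mul_right]
  refine ENNReal.tsum_le_tsum fun k => ?_
  rw [lintegral_indicator_const (measurableSet_le measurable_const hwm)]
  have h0 : (2:ℝ≥0∞) ^ k ≠ 0 := by simp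
  have h1 : (2:ℝ≥0∞) ^ k ≠ ⊤ := by simp
  refine (mul_le_mul_right (hw _ h0 h1) _).trans (le_of_eq ?_)
  rw [pow_succ, ENNReal.mul_rpow_of_nonneg _ _ hs0.le, ENNReal.rpow_sub _ _ h0 h1, ENNReal.rpow_one]
  simp only [div_eq_mul_inv]; ring

lemma aux_K2 {X : Type*} [MeasurableSpace X] (μ : Measure X) (s : ℝ) (hs1 : 1 < s)
    (w : X → ℝ≥0∞) (hwm : Measurable w) (B : ℝ≥0∞)
    (hw : ∀ τ : ℝ≥0∞, τ ≠ 0 → τ ≠ ⊤ → μ {x | τ ≤ w x} ≤ B / τ) :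
    ∫⁻ x, (if w x ≤ 1 then w x ^ s else 0) ∂μ
      ≤ (2 * ∑' k : ℕ, ((2:ℝ≥0∞) ^ k) ^ (1 - s)) * B := by
  have hs0 : 0 < s := by linarith
  have hpt : ∀ x, (if w x ≤ 1 then w x ^ s else 0) ≤
      ∑' k : ℕ, {x | ((2:ℝ≥0∞) ^ (k+1))⁻¹ ≤ w x}.indicator (fun _ => (((2:ℝ≥0∞) ^ k)⁻¹) ^ s) x := by
    intro x
    split_ifs with h
    · by_cases ht : w x = 0
      · simp [ht, hs0]
      · obtain ⟨k, hk, hk'⟩ := aux_dyad (w x)⁻¹ (by simpa using h) (by simpa using ht)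
        refine le_trans ?_ (ENNReal.le_tsum k)
        have hk2 : ((2:ℝ≥0∞) ^ (k+1))⁻¹ ≤ w x := by
          rw [ENNReal.inv_le_iff_inv_le]; exact hk'
        rw [Set.indicator_of_mem (by exact hk2)]
        refine ENNReal.rpow_le_rpow ?_ hs0.le
        rw [ENNReal.le_inv_iff_le_inv]; exact hk
    · simp
  refine (lintegral_mono hpt).trans ?_
  rw [lintegral_tsum (fun k => (measurable_const.indicator
    (measurableSet_le measurable_const hwm)).aemeasurable)]
  rw [← ENNReal.tsum_mul_left, ← ENNReal.tsum_mul_right]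
  refine ENNReal.tsum_le_tsum fun k => ?_
  rw [lintegral_indicator_const (measurableSet_le measurable_const hwm)]
  have h0 : (2:ℝ≥0∞) ^ k ≠ 0 := by simp
  have h1 : (2:ℝ≥0∞) ^ k ≠ ⊤ := by simp
  have h0' : (2:ℝ≥0∞) ^ (k+1) ≠ 0 := by simp
  have h1' : (2:ℝ≥0∞) ^ (k+1) ≠ ⊤ := by simp
  refine (mul_le_mul_right (hw _ (ENNReal.inv_ne_zero.2 h1') (ENNReal.inv_ne_top.2 h0')) _).trans
    (le_of_eq ?_)
  rw [ENNReal.rpow_sub _ _ h0 h1, ENNReal.rpow_one, ENNReal.inv_rpow]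
  simp only [div_eq_mul_inv, inv_inv, pow_succ]; ring

/-- combined kernel lemma, at arbitrary level `t`, with extra power. -/
lemma aux_K {X : Type*} [MeasurableSpace X] (μ : Measure X) (s : ℝ) (hs0 : 0 < s)
    (w : X → ℝ≥0∞) (hwm : Measurable w) (B : ℝ≥0∞)
    (hw : ∀ τ : ℝ≥0∞, τ ≠ 0 → τ ≠ ⊤ → μ {x | τ ≤ w x} ≤ B / τ)
    (t : ℝ≥0∞) (h0 : t ≠ 0) (h1 : t ≠ ⊤) :
    (s < 1 → ∫⁻ x, (if t ≤ w x then w x ^ s else 0) ∂μ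
      ≤ t ^ (s - 1) * ((2 ^ s * ∑' k : ℕ, ((2:ℝ≥0∞) ^ k) ^ (s - 1)) * B)) ∧
    (1 < s → ∫⁻ x, (if w x ≤ t then w x ^ s else 0) ∂μ
      ≤ t ^ (s - 1) * ((2 * ∑' k : ℕ, ((2:ℝ≥0∞) ^ k) ^ (1 - s)) * B)) := by
  have hm : Measurable fun x => w x / t := hwm.div_const t
  have hw' : ∀ τ : ℝ≥0∞, τ ≠ 0 → τ ≠ ⊤ → μ {x | τ ≤ w x / t} ≤ (B / t) / τ := by
    intro τ a b
    have : {x | τ ≤ w x / t} = {x | τ * t ≤ w x} := by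
      ext x; simp only [Set.mem_setOf_eq]
      rw [ENNReal.le_div_iff_mul_le (Or.inl h0) (Or.inl h1)]
    rw [this]
    refine (hw _ (mul_ne_zero a h0) (ENNReal.mul_ne_top b h1)).trans (le_of_eq ?_)
    rw [div_eq_mul_inv, div_eq_mul_inv, div_eq_mul_inv, ENNReal.mul_inv (Or.inl a) (Or.inl b)]; ring
  have hts : t ^ s ≠ ⊤ := ENNReal.rpow_ne_top_of_nonneg hs0.le h1
  have hrw : ∀ x, w x ^ s = t ^ s * (w x / t) ^ s := by
    intro x
    rw [← ENNReal.mul_rpow_of_nonneg _ _ hs0.le, ENNReal.mul_div_cancel h0 h1]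
  constructor
  · intro hs
    have := aux_K1 μ s hs0 hs _ hm _ hw'
    have e : ∀ x, (if t ≤ w x then w x ^ s else 0) =
        t ^ s * (if 1 ≤ w x / t then (w x / t) ^ s else 0) := by
      intro x
      have : t ≤ w x ↔ 1 ≤ w x / t := by
        rw [ENNReal.le_div_iff_mul_le (Or.inl h0) (Or.inl h1), one_mul]
      simp only [this, hrw]; split_ifs <;> simp
    simp_rw [e]
    rw [lintegral_const_mul' _ _ hts]
    refine (mul_le_mul_right this _).trans (le_of_eq ?_)
    rw [ENNReal.rpow_sub _ _ h0 h1, ENNReal.rpow_one]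
    simp only [div_eq_mul_inv]; ring
  · intro hs
    have := aux_K2 μ s hs _ hm _ hw'
    have e : ∀ x, (if w x ≤ t then w x ^ s else 0) =
        t ^ s * (if w x / t ≤ 1 then (w x / t) ^ s else 0) := by
      intro x
      have : w x ≤ t ↔ w x / t ≤ 1 := by
        rw [ENNReal.div_le_iff h0 h1, one_mul]
      simp only [this, hrw]; split_ifs <;> simp
    simp_rw [e]
    rw [lintegral_const_mul' _ _ hts]
    refine (mul_le_mul_right this _).trans (le_of_eq ?_)
    rw [ENNReal.rpow_sub _ _ h0 h1, ENNReal.rpow_one]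
    simp only [div_eq_mul_inv]; ring

lemma aux_pt (U V W : ℝ≥0∞) (α β θ : ℝ) (hα : 0 < α) (hα1 : α < 1) (hβ : 0 < β) (hβ1 : β < 1)
    (hθ : 0 < θ) (hsum : α + β + θ = 2) :
    U ^ α * V ^ β * W ^ θ ≤ U * V
      + U ^ (α + β) * (if U ≤ W then W ^ θ else 0)
      + V ^ (α + β) * (if V ≤ W then W ^ θ else 0)
      + V ^ β * (if W ≤ V then W ^ (θ + α) else 0)
      + U ^ α * (if W ≤ U then W ^ (θ + β) else 0) := by
  rcases le_total U W with h1 | h1 <;> rcases le_total V W with h2 | h2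
  · rcases le_total U V with h3 | h3
    · have : U ^ α * V ^ β * W ^ θ ≤ V ^ (α + β) * (if V ≤ W then W ^ θ else 0) := by
        rw [if_pos h2, ENNReal.rpow_add_of_nonneg _ _ hα.le hβ.le]; gcongr
      refine this.trans ?_
      rw [add_assoc, add_assoc]; exact le_add_right le_add_self |>.trans (by rw [add_assoc])
    · have : U ^ α * V ^ β * W ^ θ ≤ U ^ (α + β) * (if U ≤ W then W ^ θ else 0) := by
        rw [if_pos h1, ENNReal.rpow_add_of_nonneg _ _ hα.le hβ.le]; gcongr
      refine this.trans ?_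
      exact le_add_right <| le_add_right <| le_add_right le_add_self
  · have : U ^ α * V ^ β * W ^ θ ≤ V ^ β * (if W ≤ V then W ^ (θ + α) else 0) := by
      rw [if_pos h2, ENNReal.rpow_add_of_nonneg _ _ hθ.le hα.le]
      calc U ^ α * V ^ β * W ^ θ ≤ W ^ α * V ^ β * W ^ θ := by gcongr
        _ = _ := by ring
    exact this.trans (le_add_right le_add_self)
  · have : U ^ α * V ^ β * W ^ θ ≤ U ^ α * (if W ≤ U then W ^ (θ + β) else 0) := by
      rw [if_pos h1, ENNReal.rpow_add_of_nonneg _ _ hθ.le hβ.le]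
      calc U ^ α * V ^ β * W ^ θ ≤ U ^ α * W ^ β * W ^ θ := by gcongr
        _ = _ := by ring
    exact this.trans le_add_self
  · have : U ^ α * V ^ β * W ^ θ ≤ U * V := by
      have e : θ = (1 - α) + (1 - β) := by linarith
      have eu : U = U ^ α * U ^ (1 - α) := by
        rw [← ENNReal.rpow_add_of_nonneg _ _ hα.le (by linarith)]; simp
      have ev : V = V ^ β * V ^ (1 - β) := by
        rw [← ENNReal.rpow_add_of_nonneg _ _ hβ.le (by linarith)]; simp
      calc U ^ α * V ^ β * W ^ θ = U ^ α * V ^ β * (W ^ (1 - α) * W ^ (1 - β)) := by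
            rw [e, ENNReal.rpow_add_of_nonneg _ _ (by linarith) (by linarith)]
        _ ≤ U ^ α * V ^ β * (U ^ (1 - α) * V ^ (1 - β)) := by
            gcongr <;> linarith
        _ = (U ^ α * U ^ (1 - α)) * (V ^ β * V ^ (1 - β)) := by ring
        _ = U * V := by rw [← eu, ← ev]
    exact this.trans (le_add_right <| le_add_right <| le_add_right <| le_add_right le_rfl)

lemma aux_term1 {X : Type*} [MeasurableSpace X] (μ : Measure X) (s e : ℝ) (hs0 : 0 < s)
    (he : 0 < e) (hse : e + s = 2) (hs : s < 1)
    (w : X → ℝ≥0∞) (hwm : Measurable w) (B : ℝ≥0∞)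
    (hw : ∀ τ : ℝ≥0∞, τ ≠ 0 → τ ≠ ⊤ → μ {x | τ ≤ w x} ≤ B / τ) (t : ℝ≥0∞) :
    t ^ e * ∫⁻ x, (if t ≤ w x then w x ^ s else 0) ∂μ ≤
      ((2 ^ s * ∑' k : ℕ, ((2:ℝ≥0∞) ^ k) ^ (s - 1)) * B + 1) * t := by
  by_cases h0 : t = 0
  · simp [h0, he]
  by_cases h1 : t = ⊤
  · simp [h1]
  refine (mul_le_mul_right ((aux_K μ s hs0 w hwm B hw t h0 h1).1 hs) _).trans ?_
  rw [← mul_assoc, ← ENNReal.rpow_add _ _ h0 h1, show e + (s - 1) = 1 by linarith,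
    ENNReal.rpow_one, mul_comm]
  gcongr
  exact le_self_add

lemma aux_term2 {X : Type*} [MeasurableSpace X] (μ : Measure X) (s e : ℝ) (hs0 : 0 < s)
    (he : 0 < e) (hse : e + s = 2) (hs : 1 < s)
    (w : X → ℝ≥0∞) (hwm : Measurable w) (B : ℝ≥0∞)
    (hw : ∀ τ : ℝ≥0∞, τ ≠ 0 → τ ≠ ⊤ → μ {x | τ ≤ w x} ≤ B / τ) (t : ℝ≥0∞) :
    t ^ e * ∫⁻ x, (if w x ≤ t then w x ^ s else 0) ∂μ ≤
      ((2 * ∑' k : ℕ, ((2:ℝ≥0∞) ^ k) ^ (1 - s)) * B + 1) * t := by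
  by_cases h0 : t = 0
  · simp [h0, he]
  by_cases h1 : t = ⊤
  · simp [h1]
  refine (mul_le_mul_right ((aux_K μ s hs0 w hwm B hw t h0 h1).2 hs) _).trans ?_
  rw [← mul_assoc, ← ENNReal.rpow_add _ _ h0 h1, show e + (s - 1) = 1 by linarith,
    ENNReal.rpow_one, mul_comm]
  gcongr
  exact le_self_add

lemma aux_bil {X : Type*} [MeasurableSpace X] (μ : Measure X) [SFinite μ]
    (α β θ : ℝ) (hα : 0 < α) (hα1 : α < 1) (hβ : 0 < β) (hβ1 : β < 1)
    (hθ : 0 < θ) (hθ1 : θ < 1) (hsum : α + β + θ = 2)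
    (W : X → X → ℝ≥0∞) (hW : Measurable fun p : X × X => W p.1 p.2)
    (hsymm : ∀ x y, W x y = W y x) (B : ℝ≥0∞) (hB : B ≠ ⊤)
    (hw : ∀ x, ∀ τ : ℝ≥0∞, τ ≠ 0 → τ ≠ ⊤ → μ {y | τ ≤ W x y} ≤ B / τ) :
    ∃ K : ℝ≥0∞, K ≠ ⊤ ∧ ∀ U V : X → ℝ≥0∞, Measurable U → Measurable V →
      ∫⁻ x, ∫⁻ y, U y ^ α * V x ^ β * W x y ^ θ ∂μ ∂μ ≤
        (∫⁻ x, U x ∂μ) * (∫⁻ x, V x ∂μ) + K * (∫⁻ x, U x ∂μ) + K * (∫⁻ x, V x ∂μ) := by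
  have hWx : ∀ x, Measurable (W x) := fun x => hW.comp measurable_prodMk_left
  set C1 : ℝ≥0∞ := (2 ^ θ * ∑' k : ℕ, ((2:ℝ≥0∞) ^ k) ^ (θ - 1)) * B + 1 with hC1
  set C2 : ℝ≥0∞ := (2 * ∑' k : ℕ, ((2:ℝ≥0∞) ^ k) ^ (1 - (θ + α))) * B + 1 with hC2
  set C3 : ℝ≥0∞ := (2 * ∑' k : ℕ, ((2:ℝ≥0∞) ^ k) ^ (1 - (θ + β))) * B + 1 with hC3
  have hC1t : C1 ≠ ⊤ := by
    refine ENNReal.add_ne_top.2 ⟨ENNReal.mul_ne_top (ENNReal.mul_ne_top ?_ (aux_geom _ (by linarith))) hB, by simp⟩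
    exact ENNReal.rpow_ne_top_of_nonneg hθ.le (by simp)
  have hC2t : C2 ≠ ⊤ :=
    ENNReal.add_ne_top.2 ⟨ENNReal.mul_ne_top (ENNReal.mul_ne_top (by simp) (aux_geom _ (by linarith))) hB, by simp⟩
  have hC3t : C3 ≠ ⊤ :=
    ENNReal.add_ne_top.2 ⟨ENNReal.mul_ne_top (ENNReal.mul_ne_top (by simp) (aux_geom _ (by linarith))) hB, by simp⟩
  refine ⟨C1 + C2 + C3, by simp [hC1t, hC2t, hC3t], fun U V hU hV => ?_⟩
  have hU2 : Measurable fun p : X × X => U p.2 := hU.comp measurable_snd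
  have hV1 : Measurable fun p : X × X => V p.1 := hV.comp measurable_fst
  have m2 : Measurable fun p : X × X =>
      U p.2 ^ (α + β) * (if U p.2 ≤ W p.1 p.2 then W p.1 p.2 ^ θ else 0) :=
    (hU2.pow_const _).mul (Measurable.ite (measurableSet_le hU2 hW) (hW.pow_const _) measurable_const)
  have m3 : Measurable fun p : X × X =>
      V p.1 ^ (α + β) * (if V p.1 ≤ W p.1 p.2 then W p.1 p.2 ^ θ else 0) :=
    (hV1.pow_const _).mul (Measurable.ite (measurableSet_le hV1 hW) (hW.pow_const _) measurable_const)
  have m4 : Measurable fun p : X × X =>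
      V p.1 ^ β * (if W p.1 p.2 ≤ V p.1 then W p.1 p.2 ^ (θ + α) else 0) :=
    (hV1.pow_const _).mul (Measurable.ite (measurableSet_le hW hV1) (hW.pow_const _) measurable_const)
  have m5 : Measurable fun p : X × X =>
      U p.2 ^ α * (if W p.1 p.2 ≤ U p.2 then W p.1 p.2 ^ (θ + β) else 0) :=
    (hU2.pow_const _).mul (Measurable.ite (measurableSet_le hW hU2) (hW.pow_const _) measurable_const)
  have m0 : Measurable fun p : X × X => U p.2 ^ α * V p.1 ^ β * W p.1 p.2 ^ θ :=
    ((hU2.pow_const _).mul (hV1.pow_const _)).mul (hW.pow_const _)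
  have b1 : ∫⁻ p : X × X, U p.2 * V p.1 ∂(μ.prod μ) = (∫⁻ x, U x ∂μ) * (∫⁻ x, V x ∂μ) := by
    rw [lintegral_prod (fun p : X × X => U p.2 * V p.1) (hU2.mul hV1).aemeasurable]
    simp only
    simp_rw [lintegral_mul_const _ hU]
    rw [lintegral_const_mul _ hV]
  have b2 : ∫⁻ p : X × X, U p.2 ^ (α + β) * (if U p.2 ≤ W p.1 p.2 then W p.1 p.2 ^ θ else 0)
      ∂(μ.prod μ) ≤ C1 * ∫⁻ x, U x ∂μ := by
    rw [lintegral_prod_symm _ m2.aemeasurable, ← lintegral_const_mul _ hU]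
    refine lintegral_mono fun y => ?_
    simp only
    have := aux_term1 μ θ (α + β) hθ (by linarith) hsum hθ1 (W y) (hWx y) B (hw y) (U y)
    rw [← lintegral_const_mul _ (Measurable.ite (measurableSet_le measurable_const (hWx y))
      ((hWx y).pow_const _) measurable_const)] at this
    simpa only [hsymm y] using this
  have b3 : ∫⁻ p : X × X, V p.1 ^ (α + β) * (if V p.1 ≤ W p.1 p.2 then W p.1 p.2 ^ θ else 0)
      ∂(μ.prod μ) ≤ C1 * ∫⁻ x, V x ∂μ := by
    rw [lintegral_prod _ m3.aemeasurable, ← lintegral_const_mul _ hV]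
    refine lintegral_mono fun y => ?_
    simp only
    have := aux_term1 μ θ (α + β) hθ (by linarith) hsum hθ1 (W y) (hWx y) B (hw y) (V y)
    rw [← lintegral_const_mul _ (Measurable.ite (measurableSet_le measurable_const (hWx y))
      ((hWx y).pow_const _) measurable_const)] at this
    exact this
  have b4 : ∫⁻ p : X × X, V p.1 ^ β * (if W p.1 p.2 ≤ V p.1 then W p.1 p.2 ^ (θ + α) else 0)
      ∂(μ.prod μ) ≤ C2 * ∫⁻ x, V x ∂μ := by
    rw [lintegral_prod _ m4.aemeasurable, ← lintegral_const_mul _ hV]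
    refine lintegral_mono fun y => ?_
    simp only
    have := aux_term2 μ (θ + α) β (by linarith) hβ (by linarith) (by linarith) (W y) (hWx y) B (hw y) (V y)
    rw [← lintegral_const_mul _ (Measurable.ite (measurableSet_le (hWx y) measurable_const)
      ((hWx y).pow_const _) measurable_const)] at this
    exact this
  have b5 : ∫⁻ p : X × X, U p.2 ^ α * (if W p.1 p.2 ≤ U p.2 then W p.1 p.2 ^ (θ + β) else 0)
      ∂(μ.prod μ) ≤ C3 * ∫⁻ x, U x ∂μ := by
    rw [lintegral_prod_symm _ m5.aemeasurable, ← lintegral_const_mul _ hU]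
    refine lintegral_mono fun y => ?_
    simp only
    have := aux_term2 μ (θ + β) α (by linarith) hα (by linarith) (by linarith) (W y) (hWx y) B (hw y) (U y)
    rw [← lintegral_const_mul _ (Measurable.ite (measurableSet_le (hWx y) measurable_const)
      ((hWx y).pow_const _) measurable_const)] at this
    simpa only [hsymm y] using this
  have e0 := lintegral_prod (μ := μ) (ν := μ) _ m0.aemeasurable
  simp only at e0
  rw [← e0]
  refine (lintegral_mono fun p : X × X => aux_pt (U p.2) (V p.1) (W p.1 p.2) α β θ hα hα1 hβ hβ1 hθ hsum).trans ?_
  rw [lintegral_add_right _ m5, lintegral_add_right _ m4, lintegral_add_right _ m3,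
    lintegral_add_right _ m2, b1]
  calc _ ≤ (∫⁻ x, U x ∂μ) * (∫⁻ x, V x ∂μ) + C1 * ∫⁻ x, U x ∂μ + C1 * ∫⁻ x, V x ∂μ
        + C2 * ∫⁻ x, V x ∂μ + C3 * ∫⁻ x, U x ∂μ := by gcongr
    _ = (∫⁻ x, U x ∂μ) * (∫⁻ x, V x ∂μ) + (C1 + C3) * (∫⁻ x, U x ∂μ)
        + (C1 + C2) * (∫⁻ x, V x ∂μ) := by ring
    _ ≤ _ := by
      have i1 : C1 + C3 ≤ C1 + C2 + C3 := add_le_add le_self_add le_rfl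
      have i2 : C1 + C2 ≤ C1 + C2 + C3 := le_self_add
      exact add_le_add (add_le_add le_rfl (mul_le_mul' i1 le_rfl)) (mul_le_mul' i2 le_rfl)

lemma aux_hls {X : Type*} [MeasurableSpace X] (μ : Measure X) [SigmaFinite μ]
    (α β θ : ℝ) (hα : 0 < α) (hα1 : α < 1) (hβ : 0 < β) (hβ1 : β < 1)
    (hθ : 0 < θ) (hθ1 : θ < 1) (hsum : α + β + θ = 2)
    (W : X → X → ℝ≥0∞) (hW : Measurable fun p : X × X => W p.1 p.2)
    (hsymm : ∀ x y, W x y = W y x) (B : ℝ≥0∞) (hB : B ≠ ⊤)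
    (hw : ∀ x, ∀ τ : ℝ≥0∞, τ ≠ 0 → τ ≠ ⊤ → μ {y | τ ≤ W x y} ≤ B / τ) :
    ∃ K : ℝ≥0∞, K ≠ ⊤ ∧ ∀ U : X → ℝ≥0∞, Measurable U → ∫⁻ x, U x ∂μ ≤ 1 →
      (∫⁻ x, (∫⁻ y, U y ^ α * W x y ^ θ ∂μ) ^ (1 / (1 - β)) ∂μ) ^ (1 - β) ≤ K := by
  obtain ⟨K, hK, h⟩ := aux_bil μ α β θ hα hα1 hβ hβ1 hθ hθ1 hsum W hW hsymm B hB hw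
  refine ⟨1 + K + K, by simp [hK], fun U hU hU1 => ?_⟩
  have hb : 0 < 1 - β := by linarith
  set q : ℝ := 1 / (1 - β) with hq
  have hq0 : 0 < q := by positivity
  have hqe : 1 + q * β = q := by rw [hq]; field_simp; ring
  set F : X → ℝ≥0∞ := fun x => ∫⁻ y, U y ^ α * W x y ^ θ ∂μ with hF
  have hFm : Measurable F :=
    Measurable.lintegral_prod_right' (f := fun p : X × X => U p.2 ^ α * W p.1 p.2 ^ θ)
      (((hU.comp measurable_snd).pow_const _).mul (hW.pow_const _))
  -- truncations
  set G : ℕ → X → ℝ≥0∞ := fun n => (spanningSets μ n).indicator (fun x => min (F x) n) with hG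
  have hGm : ∀ n, Measurable (G n) := fun n =>
    (hFm.min measurable_const).indicator (measurableSet_spanningSets μ n)
  have hGF : ∀ n x, G n x ≤ F x := by
    intro n x
    by_cases hx : x ∈ spanningSets μ n
    · simp [hG, hx]
    · simp [hG, hx]
  have key : ∀ n, (∫⁻ x, G n x ^ q ∂μ) ^ (1 - β) ≤ 1 + K + K := by
    intro n
    set M := ∫⁻ x, G n x ^ q ∂μ with hM
    by_cases hM0 : M = 0
    · simp [hM0, hb]
    have hMt : M ≠ ⊤ := by
      have : M ≤ ∫⁻ x, (spanningSets μ n).indicator (fun _ => (n : ℝ≥0∞) ^ q) x ∂μ := by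
        refine lintegral_mono fun x => ?_
        by_cases hx : x ∈ spanningSets μ n
        · simp only [hG, Set.indicator_of_mem hx]
          exact ENNReal.rpow_le_rpow (min_le_right _ _) hq0.le
        · simp [hG, hx, hq0]
      rw [lintegral_indicator_const (measurableSet_spanningSets μ n)] at this
      refine ne_top_of_le_ne_top (ENNReal.mul_ne_top ?_ (measure_spanningSets_lt_top μ n).ne) this
      exact ENNReal.rpow_ne_top_of_nonneg hq0.le (by simp)
    have hV := h U (fun x => M⁻¹ * G n x ^ q) hU (((hGm n).pow_const _).const_mul _)
    have hV1 : ∫⁻ x, M⁻¹ * G n x ^ q ∂μ = 1 := by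
      rw [lintegral_const_mul _ ((hGm n).pow_const _), ← hM, ENNReal.inv_mul_cancel hM0 hMt]
    rw [hV1] at hV
    have hlow : M ^ (1 - β) ≤
        ∫⁻ x, ∫⁻ y, U y ^ α * (M⁻¹ * G n x ^ q) ^ β * W x y ^ θ ∂μ ∂μ := by
      have e1 : M ^ (1 - β) = ∫⁻ x, (M⁻¹) ^ β * G n x ^ q ∂μ := by
        rw [lintegral_const_mul _ ((hGm n).pow_const _), ← hM, ENNReal.inv_rpow,
          ENNReal.rpow_sub _ _ hM0 hMt, ENNReal.rpow_one, div_eq_mul_inv, mul_comm]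
      rw [e1]
      refine lintegral_mono fun x => ?_
      have e2 : ∫⁻ y, U y ^ α * (M⁻¹ * G n x ^ q) ^ β * W x y ^ θ ∂μ
          = (M⁻¹ * G n x ^ q) ^ β * F x := by
        rw [hF, ← lintegral_const_mul]
        · refine lintegral_congr fun y => ?_
          ring
        · exact (hU.pow_const _).mul ((hW.comp measurable_prodMk_left).pow_const _)
      simp only
      rw [e2, ENNReal.mul_rpow_of_nonneg _ _ hβ.le, ← ENNReal.rpow_mul, mul_assoc]
      gcongr
      calc G n x ^ q = G n x ^ (q * β) * G n x := by
            conv_lhs => rw [← hqe, ENNReal.rpow_add_of_nonneg _ _ zero_le_one (by positivity),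
              ENNReal.rpow_one, mul_comm]
        _ ≤ _ := by gcongr; exact hGF n x
    refine hlow.trans (hV.trans ?_)
    calc _ ≤ 1 * 1 + K * 1 + K * 1 := by gcongr
      _ = _ := by ring
  have hlim : ∀ x, F x ^ q ≤ ⨆ n, G n x ^ q := by
    intro x
    have hmono : Monotone fun n => G n x := by
      intro m n hmn
      simp only [hG]
      by_cases hx : x ∈ spanningSets μ m
      · have hx' := monotone_spanningSets μ hmn hx
        rw [Set.indicator_of_mem hx, Set.indicator_of_mem hx']
        exact min_le_min le_rfl (by exact_mod_cast hmn)
      · simp [hx]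
    have ht : Filter.Tendsto (fun n => G n x) Filter.atTop (nhds (F x)) := by
      have h1 : Filter.Tendsto (fun n : ℕ => min (F x) (n : ℝ≥0∞)) Filter.atTop (nhds (min (F x) ⊤)) :=
        tendsto_const_nhds.min ENNReal.tendsto_nat_nhds_top
      rw [min_eq_left le_top] at h1
      refine h1.congr' ?_
      filter_upwards [Filter.eventually_ge_atTop (spanningSetsIndex μ x)] with n hn
      have hx : x ∈ spanningSets μ n := mem_spanningSets_of_index_le μ x hn
      simp [hG, hx]
    have ht' : Filter.Tendsto (fun n => G n x ^ q) Filter.atTop (nhds (F x ^ q)) :=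
      (ENNReal.continuous_rpow_const.tendsto _).comp ht
    exact le_of_tendsto' ht' fun n => le_iSup (fun n => G n x ^ q) n
  have hmonoG : Monotone fun n x => G n x ^ q := by
    intro m n hmn x
    refine ENNReal.rpow_le_rpow ?_ hq0.le
    simp only [hG]
    by_cases hx : x ∈ spanningSets μ m
    · have hx' := monotone_spanningSets μ hmn hx
      rw [Set.indicator_of_mem hx, Set.indicator_of_mem hx']
      exact min_le_min le_rfl (by exact_mod_cast hmn)
    · simp [hx]
  rw [← ENNReal.le_rpow_inv_iff hb]
  refine (lintegral_mono hlim).trans ?_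
  rw [lintegral_iSup (fun n => (hGm n).pow_const _) hmonoG]
  refine iSup_le fun n => ?_
  rw [ENNReal.le_rpow_inv_iff hb]
  exact key n

lemma aux_level {X : Type*} [MeasurableSpace X] (d : X → X → ℝ) (μ : Measure X)
    (η a A : ℝ) (hη : 0 < η) (hA : 0 < A) (hAhl : IsAhlfors d μ η a A) (x : X)
    (τ : ℝ≥0∞) (h0 : τ ≠ 0) (h1 : τ ≠ ⊤) :
    μ {y | τ ≤ ENNReal.ofReal (d x y) ^ (-η)} ≤ ENNReal.ofReal (A * 2 ^ η) / τ := by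
  have ht : 0 < τ.toReal := ENNReal.toReal_pos h0 h1
  set r : ℝ := τ.toReal ^ (-(1/η)) with hr
  have hr0 : 0 < r := Real.rpow_pos_of_pos ht _
  have hrη : r ^ (-η) = τ.toReal := by
    rw [hr, ← Real.rpow_mul ht.le]
    have : -(1/η) * -η = 1 := by field_simp
    rw [this, Real.rpow_one]
  have hrη' : r ^ η = τ.toReal⁻¹ := by
    rw [← hrη, Real.rpow_neg hr0.le, inv_inv]
  have hsub : {y | τ ≤ ENNReal.ofReal (d x y) ^ (-η)} ⊆ {y | d x y < 2 * r} := by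
    intro y hy
    by_contra hc
    have hc' : 2 * r ≤ d x y := not_lt.1 hc
    have hd : r < d x y := by linarith
    have hd0 : 0 < d x y := hr0.trans hd
    have hy' : τ ≤ ENNReal.ofReal (d x y) ^ (-η) := hy
    rw [ENNReal.ofReal_rpow_of_pos hd0, ← ENNReal.ofReal_toReal h1, ← hrη] at hy'
    rw [ENNReal.ofReal_le_ofReal_iff (Real.rpow_nonneg hd0.le _)] at hy'
    exact absurd hy' (not_le.2 (Real.rpow_lt_rpow_of_neg hr0 hd (by linarith)))
  refine (measure_mono hsub).trans ((hAhl x (2 * r) (by positivity)).2.trans (le_of_eq ?_))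
  rw [Real.mul_rpow (by norm_num) hr0.le, hrη', ← mul_assoc, ENNReal.ofReal_mul (by positivity),
    ENNReal.ofReal_inv_of_pos ht, ENNReal.ofReal_toReal h1, div_eq_mul_inv]

lemma aux_frac_meas {X : Type*} [MeasurableSpace X]
    (d : X → X → ℝ) (hd_meas : Measurable fun p : X × X => d p.1 p.2)
    (μ : Measure X) [SigmaFinite μ] (β η : ℝ) (f : X → ℝ≥0∞) (hf : Measurable f) :
    Measurable (fracInt d μ β η f) :=
  Measurable.lintegral_prod_right'
    (f := fun p : X × X => f p.2 * (ENNReal.ofReal (d p.1 p.2)) ^ (β - η))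
    ((hf.comp measurable_snd).mul (hd_meas.ennreal_ofReal.pow_const _))

lemma aux_frac_s1 {X : Type*} [MeasurableSpace X]
    (d : X → X → ℝ) (κ : ℝ) (hqm : IsQuasiMetric d κ)
    (hd_meas : Measurable fun p : X × X => d p.1 p.2)
    (μ : Measure X) [SigmaFinite μ] (η : ℝ) (hη : 0 < η)
    (a A : ℝ) (hA : 0 < A) (hAhl : IsAhlfors d μ η a A)
    (γ : ℝ) (hγ0 : 0 < γ) (hγ2η : γ < 2 * η)
    (σ : ℝ) (hσ : σ = (2 * η - γ) / (2 * η))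
    (p : ℝ) (hpl : σ < 1 / p) (hpu : 1 / p < 1) :
    ∃ K : ℝ≥0∞, K ≠ ⊤ ∧ ∀ f : X → ℝ≥0∞, Measurable f → lpNorm μ p f ≠ ⊤ →
      (∫⁻ x, fracInt d μ (η - γ / 2) η f x ^ (1 / (1 / p - σ)) ∂μ) ^ (1 / p - σ)
        ≤ K * lpNorm μ p f := by
  have hσ0 : 0 < σ := by rw [hσ]; apply div_pos <;> linarith
  have hp0 : 0 < p := one_div_pos.1 (hσ0.trans hpl)
  have hθe : 1 - σ = γ / (2 * η) := by rw [hσ]; field_simp; ring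
  have hθ : 0 < 1 - σ := by rw [hθe]; positivity
  obtain ⟨K, hK, h⟩ := aux_hls μ (1/p) (1 + σ - 1/p) (1 - σ) (by positivity) hpu (by linarith)
    (by linarith) hθ (by linarith) (by ring) (fun x y => ENNReal.ofReal (d x y) ^ (-η))
    (hd_meas.ennreal_ofReal.pow_const _) (fun x y => by simp only [hqm.2.2.1 x y])
    (ENNReal.ofReal (A * 2 ^ η)) (by simp) (aux_level d μ η a A hη hA hAhl)
  have hbe : 1 - (1 + σ - 1/p) = 1/p - σ := by ring
  rw [hbe] at h
  have hb : 0 < 1/p - σ := by linarith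
  refine ⟨K, hK, fun f hf hfin => ?_⟩
  have hker : ∀ x y, (ENNReal.ofReal (d x y) ^ (-η)) ^ (1 - σ)
      = ENNReal.ofReal (d x y) ^ (η - γ/2 - η) := by
    intro x y
    rw [← ENNReal.rpow_mul]; congr 1; rw [hθe]; field_simp; ring
  simp only [hker] at h
  set N := ∫⁻ x, f x ^ p ∂μ with hN
  have hlp : lpNorm μ p f = N ^ (1/p) := rfl
  have hpp : 0 < 1 / p := by positivity
  have hNt : N ≠ ⊤ := by
    intro hc
    exact hfin (by rw [hlp, hc, ENNReal.top_rpow_of_pos hpp])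
  by_cases hN0 : N = 0
  · have hae : ∀ᵐ x ∂μ, f x = 0 := by
      have := (lintegral_eq_zero_iff (hf.pow_const p)).1 hN0
      filter_upwards [this] with x hx
      have hx' : f x ^ p = 0 := hx
      exact (ENNReal.rpow_eq_zero_iff_of_pos hp0).1 hx'
    have hz : ∀ x, fracInt d μ (η - γ/2) η f x = 0 := by
      intro x
      unfold fracInt
      rw [lintegral_congr_ae (g := fun _ => 0)]
      · simp
      · filter_upwards [hae] with y hy
        simp [hy]
    have hq0 : 0 < 1 / (1/p - σ) := by positivity
    simp only [hz, ENNReal.zero_rpow_of_pos hq0, lintegral_zero, ENNReal.zero_rpow_of_pos hb]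
    exact zero_le
  have hU := h (fun x => N⁻¹ * f x ^ p) ((hf.pow_const _).const_mul _)
    (by rw [lintegral_const_mul _ (hf.pow_const _), ← hN, ENNReal.inv_mul_cancel hN0 hNt])
  have hNp0 : N ^ (1/p) ≠ 0 := by simp [ENNReal.rpow_eq_zero_iff, hN0, hNt]
  have hNpt : N ^ (1/p) ≠ ⊤ := ENNReal.rpow_ne_top_of_nonneg hpp.le hNt
  have hF : ∀ x, fracInt d μ (η - γ/2) η f x = N ^ (1/p) *
      ∫⁻ y, (N⁻¹ * f y ^ p) ^ (1/p) * ENNReal.ofReal (d x y) ^ (η - γ/2 - η) ∂μ := by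
    intro x
    rw [← lintegral_const_mul' _ _ hNpt]
    refine lintegral_congr fun y => ?_
    rw [ENNReal.mul_rpow_of_nonneg _ _ hpp.le, ← ENNReal.rpow_mul, mul_one_div_cancel hp0.ne',
      ENNReal.rpow_one, ENNReal.inv_rpow, ← mul_assoc, ← mul_assoc,
      ENNReal.mul_inv_cancel hNp0 hNpt, one_mul]
  have hq0 : 0 < 1 / (1/p - σ) := by positivity
  simp_rw [hF, ENNReal.mul_rpow_of_nonneg _ _ hq0.le]
  rw [lintegral_const_mul' _ _ (ENNReal.rpow_ne_top_of_nonneg hq0.le hNpt),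
    ENNReal.mul_rpow_of_nonneg _ _ hb.le, ← ENNReal.rpow_mul, one_div_mul_cancel hb.ne',
    ENNReal.rpow_one, hlp, mul_comm]
  gcongr

/-- Case `A_σ`: `‖(I_{η-γ/2}f)(I_{η-γ/2}g)‖_{p₃} ≤ C ‖f‖_{p₁} ‖g‖_{p₂}` when
`σ < 1/p₁ < 1`, `σ < 1/p₂ < 1` and `1/p₃ = 1/p₁ + 1/p₂ - 2σ`, `σ = (2η-γ)/(2η)`. -/
theorem statement1 {X : Type*} [MeasurableSpace X]
    (d : X → X → ℝ) (κ : ℝ) (hκ : 1 ≤ κ) (hqm : IsQuasiMetric d κ)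
    (hd_meas : Measurable fun p : X × X => d p.1 p.2)
    (μ : Measure X) (η : ℝ) (hη : 0 < η)
    (a A : ℝ) (ha : 0 < a) (haA : a ≤ A) (hAhl : IsAhlfors d μ η a A)
    (γ : ℝ) (hγ0 : 0 < γ) (hγ2η : γ < 2 * η)
    (σ : ℝ) (hσ : σ = (2 * η - γ) / (2 * η))
    (p₁ p₂ p₃ : ℝ)
    (hp₁l : σ < 1 / p₁) (hp₁u : 1 / p₁ < 1)
    (hp₂l : σ < 1 / p₂) (hp₂u : 1 / p₂ < 1)
    (hp₃ : 1 / p₃ = 1 / p₁ + 1 / p₂ - 2 * σ) :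
    ∃ C : ℝ, 0 < C ∧ ∀ f g : X → ℝ≥0∞, Measurable f → Measurable g →
      lpNorm μ p₁ f ≠ ⊤ → lpNorm μ p₂ g ≠ ⊤ →
      lpNorm μ p₃
          (fun x => fracInt d μ (η - γ / 2) η f x * fracInt d μ (η - γ / 2) η g x) ≤
        ENNReal.ofReal C * lpNorm μ p₁ f * lpNorm μ p₂ g := by
  have hA : 0 < A := ha.trans_le haA
  haveI := aux_sigmaFinite d μ η a A hAhl
  obtain ⟨K₁, hK₁, h₁⟩ := aux_frac_s1 d κ hqm hd_meas μ η hη a A hA hAhl γ hγ0 hγ2η σ hσ p₁ hp₁l hp₁u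
  obtain ⟨K₂, hK₂, h₂⟩ := aux_frac_s1 d κ hqm hd_meas μ η hη a A hA hAhl γ hγ0 hγ2η σ hσ p₂ hp₂l hp₂u
  have hb₁ : 0 < 1/p₁ - σ := by linarith
  have hb₂ : 0 < 1/p₂ - σ := by linarith
  have hp3 : 0 < p₃ := one_div_pos.1 (by rw [hp₃]; linarith)
  refine ⟨(K₁ * K₂).toReal + 1, by positivity, fun f g hf hg hfin hgin => ?_⟩
  have hlt : p₃ < 1 / (1/p₁ - σ) := by
    rw [lt_one_div hp3 hb₁, hp₃]; linarith
  have hH := ENNReal.lintegral_Lp_mul_le_Lq_mul_Lr (p := p₃) (q := 1 / (1/p₁ - σ))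
    (r := 1 / (1/p₂ - σ)) hp3 hlt (by rw [one_div_one_div, one_div_one_div, hp₃]; ring) μ
    (aux_frac_meas d hd_meas μ (η - γ/2) η f hf).aemeasurable
    (aux_frac_meas d hd_meas μ (η - γ/2) η g hg).aemeasurable
  rw [one_div_one_div, one_div_one_div] at hH
  refine le_trans hH ((mul_le_mul' (h₁ f hf hfin) (h₂ g hg hgin)).trans ?_)
  have hKK : K₁ * K₂ ≤ ENNReal.ofReal ((K₁ * K₂).toReal + 1) := by
    conv_lhs => rw [← ENNReal.ofReal_toReal (ENNReal.mul_ne_top hK₁ hK₂)]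
    exact ENNReal.ofReal_le_ofReal (by linarith)
  calc K₁ * lpNorm μ p₁ f * (K₂ * lpNorm μ p₂ g)
      = K₁ * K₂ * lpNorm μ p₁ f * lpNorm μ p₂ g := by ring
    _ ≤ _ := by gcongr
end

section
/- Let (X,d,μ) be an η-Ahlfors regular quasi-metric measure space with η > 0 and triangular constant κ ≥ 1, let 0 < γ < 2η and set σ = (2η−γ)/(2η). Suppose p₁, p₂, p₃ satisfy 0 < 1/p₁ < 1, σ < 1/p₂ < 1, 2σ < 1/p₁ + 1/p₂ < 1 + σ and 1/p₃ = 1/p₁ + 1/p₂ − 2σ. Then there exists C > 0 such that ‖I_{η−γ/2}(f · I_{η−γ/2}g)‖_{L^{p₃}(μ)} ≤ C ‖f‖_{L^{p₁}(μ)} ‖g‖_{L^{p₂}(μ)} for every f ∈ L^{p₁}(X,μ) and g ∈ L^{p₂}(X,μ) nonnegative. -/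
open MeasureTheory ENNReal

lemma fi_layer (r : ℝ) (hr : 0 < r) (b : ℝ≥0∞) :
    ∫⁻ t in Set.Ioi (0:ℝ), (if ENNReal.ofReal t < b then ENNReal.ofReal (t ^ (r - 1)) else 0)
      = b ^ r / ENNReal.ofReal r := by
  have key : ∀ c : ℝ, 0 ≤ c → ∫⁻ t in Set.Ioi (0:ℝ),
      (if ENNReal.ofReal t < ENNReal.ofReal c then ENNReal.ofReal (t ^ (r - 1)) else 0)
      = ENNReal.ofReal c ^ r / ENNReal.ofReal r := by
    intro c hc
    have h1 : ∫⁻ t in Set.Ioi (0:ℝ),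
      (if ENNReal.ofReal t < ENNReal.ofReal c then ENNReal.ofReal (t ^ (r - 1)) else 0)
      = ∫⁻ t in Set.Ioo (0:ℝ) c, ENNReal.ofReal (t ^ (r - 1)) := by
      rw [← lintegral_indicator measurableSet_Ioi, ← lintegral_indicator measurableSet_Ioo]
      congr 1
      ext t
      simp only [Set.indicator, Set.mem_Ioi, Set.mem_Ioo]
      by_cases h0 : 0 < t
      · by_cases htc : t < c
        · have : ENNReal.ofReal t < ENNReal.ofReal c :=
            (ENNReal.ofReal_lt_ofReal_iff (h0.trans htc)).2 htc
          simp [h0, htc, this]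
        · have : ¬ ENNReal.ofReal t < ENNReal.ofReal c := by
            rw [not_lt] at htc ⊢
            exact ENNReal.ofReal_le_ofReal htc
          simp [h0, htc, this]
      · simp [h0]
    rw [h1, ← setLIntegral_congr (Ioo_ae_eq_Ioc (a := (0:ℝ)) (b := c)).symm,
      ← ofReal_integral_eq_lintegral_ofReal]
    · rw [← intervalIntegral.integral_of_le hc, integral_rpow (Or.inl (by linarith)),
        ENNReal.ofReal_rpow_of_nonneg hc hr.le, ← ENNReal.ofReal_div_of_pos hr]
      congr 1
      rw [sub_add_cancel, Real.zero_rpow hr.ne', sub_zero]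
    · exact (intervalIntegrable_iff_integrableOn_Ioc_of_le hc).1
        (intervalIntegral.intervalIntegrable_rpow' (by linarith))
    · filter_upwards [ae_restrict_mem measurableSet_Ioc] with t ht
      exact Real.rpow_nonneg ht.1.le _
  by_cases hb : b = ⊤
  · subst hb
    rw [ENNReal.top_rpow_of_pos hr, ENNReal.top_div_of_ne_top ENNReal.ofReal_ne_top, eq_top_iff]
    have hlim : Filter.Tendsto (fun n : ℕ => ENNReal.ofReal ((n:ℝ) ^ r / r)) Filter.atTop (nhds ⊤) := by
      apply ENNReal.tendsto_ofReal_nhds_top.2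
      exact ((tendsto_rpow_atTop hr).comp tendsto_natCast_atTop_atTop).atTop_div_const hr
    refine le_of_tendsto' hlim fun n => ?_
    rw [ENNReal.ofReal_div_of_pos hr, ← ENNReal.ofReal_rpow_of_nonneg (Nat.cast_nonneg n) hr.le,
      ← key n (Nat.cast_nonneg n)]
    refine lintegral_mono fun t => ?_
    simp only [ENNReal.ofReal_lt_top, if_true]
    split_ifs <;> simp
  · have := key b.toReal ENNReal.toReal_nonneg
    rwa [ENNReal.ofReal_toReal hb] at this

lemma fi_ball_meas {X : Type*} [MeasurableSpace X] {d : X → X → ℝ}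
    (hd : Measurable fun p : X × X => d p.1 p.2) (x : X) : Measurable (fun y => d x y) :=
  hd.comp (measurable_const.prodMk measurable_id)

lemma fi_sigmaFinite {X : Type*} [MeasurableSpace X] {d : X → X → ℝ}
    {μ : Measure X} {η A : ℝ}
    (hA : ∀ x : X, ∀ r : ℝ, 0 < r → μ {y | d x y < r} ≤ ENNReal.ofReal (A * r ^ η)) :
    SigmaFinite μ := by
  rcases isEmpty_or_nonempty X with h | ⟨⟨x0⟩⟩
  · rw [Measure.eq_zero_of_isEmpty μ]; infer_instance
  · refine ⟨⟨⟨fun n : ℕ => {y | d x0 y < n + 1}, fun _ => trivial, fun n => ?_, ?_⟩⟩⟩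
    · exact (hA x0 (n+1) (by positivity)).trans_lt ENNReal.ofReal_lt_top
    · ext y
      simp only [Set.mem_iUnion, Set.mem_ofPred_eq, Set.mem_univ, iff_true]
      obtain ⟨n, hn⟩ := exists_nat_gt (d x0 y)
      exact ⟨n, by linarith⟩

/-- local part of the kernel -/
lemma fi_near {X : Type*} [MeasurableSpace X] {d : X → X → ℝ} {μ : Measure X} {η A : ℝ}
    (hd : Measurable fun p : X × X => d p.1 p.2) (h0 : ∀ x y, 0 ≤ d x y)
    (hη : 0 < η) (hA0 : 0 < A)
    (hA : ∀ x : X, ∀ r : ℝ, 0 < r → μ {y | d x y < r} ≤ ENNReal.ofReal (A * r ^ η))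
    (α : ℝ) (hα : 0 < α) (hαη : α < η) :
    ∃ C : ℝ, 0 < C ∧ ∀ x : X, ∀ R : ℝ, 0 < R →
      ∫⁻ y, (if d x y < R then ENNReal.ofReal (d x y) ^ (-α) else 0) ∂μ
        ≤ ENNReal.ofReal (C * R ^ (η - α)) := by
  set w : ℝ := 2⁻¹ ^ (η - α) with hw
  have hw0 : 0 < w := by positivity
  have hw1 : w < 1 := Real.rpow_lt_one (by norm_num) (by norm_num) (by linarith)
  have hsum : Summable (fun k : ℕ => w ^ k) := summable_geometric_of_lt_one hw0.le hw1
  refine ⟨A * 2 ^ α * 2 ^ η * ∑' k : ℕ, w ^ k, ?_, fun x R hR => ?_⟩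
  · have : 0 < ∑' k : ℕ, w ^ k := hsum.tsum_pos (fun k => by positivity) 0 (by positivity)
    positivity
  have hmx := fi_ball_meas hd x
  -- null set
  have hnull : μ {y | d x y = 0} = 0 := by
    have hlim : Filter.Tendsto (fun n : ℕ => ENNReal.ofReal (A * (1 / ((n:ℝ) + 1)) ^ η))
        Filter.atTop (nhds 0) := by
      have h1 : Filter.Tendsto (fun n : ℕ => (A * (1 / ((n:ℝ) + 1)) ^ η)) Filter.atTop (nhds (A * 0 ^ η)) :=
        (tendsto_one_div_add_atTop_nhds_zero_nat.rpow_const (Or.inr hη.le)).const_mul A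
      have h2 := ENNReal.tendsto_ofReal h1
      simpa [Real.zero_rpow hη.ne'] using h2
    refine le_antisymm (ge_of_tendsto' hlim fun n => ?_) zero_le
    refine le_trans (measure_mono fun y hy => ?_) (hA x (1 / ((n:ℝ)+1)) (by positivity))
    simp only [Set.mem_ofPred_eq] at hy ⊢
    rw [hy]; positivity
  have hae : ∀ᵐ y ∂μ, d x y ≠ 0 := by
    rw [ae_iff]; simpa using hnull
  calc ∫⁻ y, (if d x y < R then ENNReal.ofReal (d x y) ^ (-α) else 0) ∂μ
      ≤ ∫⁻ y, ∑' k : ℕ, Set.indicator {y | d x y < R * 2⁻¹ ^ k * 2}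
          (fun _ => ENNReal.ofReal ((R * 2⁻¹ ^ (k+1)) ^ (-α))) y ∂μ := by
        refine lintegral_mono_ae ?_
        filter_upwards [hae] with y hy
        split_ifs with hlt
        · have hpos : 0 < d x y := lt_of_le_of_ne (h0 x y) (Ne.symm hy)
          obtain ⟨k, hk1, hk2⟩ := exists_nat_pow_near_of_lt_one (x := d x y / R) (y := (2⁻¹:ℝ))
            (by positivity) ((div_le_one hR).2 hlt.le) (by norm_num) (by norm_num)
          rw [div_le_iff₀ hR] at hk2
          rw [lt_div_iff₀ hR] at hk1
          refine le_trans ?_ (ENNReal.le_tsum k)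
          rw [Set.indicator_of_mem (by rw [Set.mem_ofPred_eq]; linarith),
            ENNReal.ofReal_rpow_of_pos hpos]
          apply ENNReal.ofReal_le_ofReal
          apply Real.rpow_le_rpow_of_nonpos (by positivity) (by linarith) (by linarith)
        · exact zero_le
    _ = ∑' k : ℕ, ENNReal.ofReal ((R * 2⁻¹ ^ (k+1)) ^ (-α)) * μ {y | d x y < R * 2⁻¹ ^ k * 2} := by
        rw [lintegral_tsum]
        · congr 1; ext k
          rw [lintegral_indicator_const (measurableSet_lt hmx measurable_const)]
        · intro k
          exact (measurable_const.indicator (measurableSet_lt hmx measurable_const)).aemeasurable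
    _ ≤ ∑' k : ℕ, ENNReal.ofReal (A * 2 ^ α * 2 ^ η * R ^ (η - α) * w ^ k) := by
        refine ENNReal.tsum_le_tsum fun k => ?_
        refine (mul_le_mul_right (hA x _ (by positivity)) _).trans (le_of_eq ?_)
        rw [← ENNReal.ofReal_mul (by positivity)]
        congr 1
        have e1 : w ^ k = ((2⁻¹:ℝ) ^ k) ^ (η - α) := by
          rw [hw, ← Real.rpow_natCast, ← Real.rpow_mul (by norm_num), ← Real.rpow_natCast,
            ← Real.rpow_mul (by norm_num), mul_comm]
        have hk : (0:ℝ) < 2⁻¹ ^ k := by positivity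
        rw [e1, pow_succ]
        generalize (2⁻¹:ℝ) ^ k = v at hk
        rw [Real.mul_rpow (by positivity) (by positivity), Real.mul_rpow hk.le (by positivity),
          Real.mul_rpow (by positivity) (by norm_num), Real.mul_rpow hR.le hk.le, Real.rpow_sub hR, Real.rpow_sub hk, Real.inv_rpow (by norm_num),
          Real.rpow_neg hR.le, Real.rpow_neg hk.le, Real.rpow_neg (by norm_num)]
        field_simp
    _ = ENNReal.ofReal (A * 2 ^ α * 2 ^ η * (∑' k : ℕ, w ^ k) * R ^ (η - α)) := by
        rw [← ENNReal.ofReal_tsum_of_nonneg (fun k => by positivity) (hsum.mul_left _), tsum_mul_left]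
        congr 1; ring

/-- far part of the kernel -/
lemma fi_far {X : Type*} [MeasurableSpace X] {d : X → X → ℝ} {μ : Measure X} {η A : ℝ}
    (hd : Measurable fun p : X × X => d p.1 p.2) 
    (hA0 : 0 < A)
    (hA : ∀ x : X, ∀ r : ℝ, 0 < r → μ {y | d x y < r} ≤ ENNReal.ofReal (A * r ^ η))
    (α : ℝ) (hα : 0 < α) (hαη : η < α) :
    ∃ C : ℝ, 0 < C ∧ ∀ x : X, ∀ R : ℝ, 0 < R →
      ∫⁻ y, (if d x y < R then 0 else ENNReal.ofReal (d x y) ^ (-α)) ∂μ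
        ≤ ENNReal.ofReal (C * R ^ (η - α)) := by
  set w : ℝ := 2 ^ (η - α) with hw
  have hw0 : 0 < w := by positivity
  have hw1 : w < 1 := Real.rpow_lt_one_of_one_lt_of_neg (by norm_num) (by linarith)
  have hsum : Summable (fun k : ℕ => w ^ k) := summable_geometric_of_lt_one hw0.le hw1
  refine ⟨A * 2 ^ η * ∑' k : ℕ, w ^ k, ?_, fun x R hR => ?_⟩
  · have : 0 < ∑' k : ℕ, w ^ k := hsum.tsum_pos (fun k => by positivity) 0 (by positivity)
    positivity
  have hmx := fi_ball_meas hd x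
  calc ∫⁻ y, (if d x y < R then 0 else ENNReal.ofReal (d x y) ^ (-α)) ∂μ
      ≤ ∫⁻ y, ∑' k : ℕ, Set.indicator {y | d x y < R * 2 ^ (k+1)}
          (fun _ => ENNReal.ofReal ((R * 2 ^ k) ^ (-α))) y ∂μ := by
        refine lintegral_mono fun y => ?_
        simp only []
        split_ifs with hlt
        · exact zero_le
        · rw [not_lt] at hlt
          have hpos : 0 < d x y := hR.trans_le hlt
          obtain ⟨k, hk1, hk2⟩ := exists_nat_pow_near (x := d x y / R) (y := (2:ℝ))
            ((one_le_div hR).2 hlt) (by norm_num)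
          rw [le_div_iff₀ hR] at hk1
          rw [div_lt_iff₀ hR] at hk2
          refine le_trans ?_ (ENNReal.le_tsum k)
          rw [Set.indicator_of_mem (by rw [Set.mem_ofPred_eq]; linarith),
            ENNReal.ofReal_rpow_of_pos hpos]
          apply ENNReal.ofReal_le_ofReal
          apply Real.rpow_le_rpow_of_nonpos (by positivity) (by linarith) (by linarith)
    _ = ∑' k : ℕ, ENNReal.ofReal ((R * 2 ^ k) ^ (-α)) * μ {y | d x y < R * 2 ^ (k+1)} := by
        rw [lintegral_tsum]
        · congr 1; ext k
          rw [lintegral_indicator_const (measurableSet_lt hmx measurable_const)]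
        · intro k
          exact (measurable_const.indicator (measurableSet_lt hmx measurable_const)).aemeasurable
    _ ≤ ∑' k : ℕ, ENNReal.ofReal (A * 2 ^ η * R ^ (η - α) * w ^ k) := by
        refine ENNReal.tsum_le_tsum fun k => ?_
        refine (mul_le_mul_right (hA x _ (by positivity)) _).trans (le_of_eq ?_)
        rw [← ENNReal.ofReal_mul (by positivity)]
        congr 1
        have e1 : w ^ k = ((2:ℝ) ^ k) ^ (η - α) := by
          rw [hw, ← Real.rpow_natCast, ← Real.rpow_mul (by norm_num), ← Real.rpow_natCast,
            ← Real.rpow_mul (by norm_num), mul_comm]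
        have hk : (0:ℝ) < 2 ^ k := by positivity
        rw [e1, pow_succ]
        generalize (2:ℝ) ^ k = v at hk
        rw [Real.mul_rpow (by positivity) (by positivity), Real.mul_rpow (by positivity) (by positivity), 
          Real.mul_rpow hk.le (by norm_num), Real.rpow_sub hR, Real.rpow_sub hk, 
          Real.rpow_neg hR.le, Real.rpow_neg hk.le]
        field_simp
    _ = ENNReal.ofReal (A * 2 ^ η * (∑' k : ℕ, w ^ k) * R ^ (η - α)) := by
        rw [← ENNReal.ofReal_tsum_of_nonneg (fun k => by positivity) (hsum.mul_left _), tsum_mul_left]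
        congr 1; ring

lemma fi_K_meas {X : Type*} [MeasurableSpace X] {d : X → X → ℝ}
    (hd : Measurable fun p : X × X => d p.1 p.2) (α : ℝ) :
    Measurable (fun z : X × X => ENNReal.ofReal (d z.1 z.2) ^ (-α)) :=
  (hd.ennreal_ofReal).pow_const _

lemma fi_level {X : Type*} [MeasurableSpace X] {d : X → X → ℝ} {μ : Measure X} {η A : ℝ}
    (hd : Measurable fun p : X × X => d p.1 p.2) (h0 : ∀ x y, 0 ≤ d x y)
    (hsymm : ∀ x y, d x y = d y x)
    (hη : 0 < η) (hA0 : 0 < A)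
    (hA : ∀ x : X, ∀ r : ℝ, 0 < r → μ {y | d x y < r} ≤ ENNReal.ofReal (A * r ^ η))
    (α : ℝ) (hα : 0 < α) (hαη : α < η) (p q : ℝ) (hp : 1 < p) (hq : 0 < q)
    (hpq : 1 / q = 1 / p - (η - α) / η) :
    ∃ c C : ℝ, 0 < c ∧ 0 < C ∧ ∀ f : X → ℝ≥0∞, Measurable f → ∫⁻ y, f y ^ p ∂μ ≤ 1 →
      ∀ t : ℝ, 0 < t → μ {x | ENNReal.ofReal t < ∫⁻ y, f y * ENNReal.ofReal (d x y) ^ (-α) ∂μ}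
        ≤ ENNReal.ofReal (C * t ^ (-(q / p))) *
          ∫⁻ y, (if ENNReal.ofReal (c * t ^ (q / p)) < f y then f y else 0) ∂μ := by
  haveI : SigmaFinite μ := fi_sigmaFinite hA
  have hp0 : 0 < p := by linarith
  obtain ⟨C1, hC1, hnear⟩ := fi_near hd h0 hη hA0 hA α hα hαη
  set p' : ℝ := p / (p - 1) with hp'
  have hconj : p.HolderConjugate p' := Real.HolderConjugate.conjExponent hp
  have hp'0 : 0 < p' := hconj.symm.pos
  have hinv : 1 / p' = 1 - 1 / p := by
    have := hconj.inv_add_inv_eq_one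
    simp only [one_div]; linarith
  have hαp : η < α * p' := by
    have h1 : 0 < 1 / q := by positivity
    have h2 : (η - α) / η = 1 - α / η := by field_simp
    have h3 : 1 / p' < α / η := by rw [hinv]; linarith
    rw [div_lt_div_iff₀ hp'0 hη] at h3
    linarith
  obtain ⟨C2, hC2, hfar⟩ := fi_far hd hA0 hA (α * p') (by positivity) hαp
  set D : ℝ := C2 ^ (1 / p') with hD
  have hD0 : 0 < D := by positivity
  set c1 : ℝ := (4 * D) ^ (q / η) with hc1
  have hc10 : 0 < c1 := by positivity
  set c2 : ℝ := 1 / (4 * C1 * c1 ^ (η - α)) with hc2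
  have hc20 : 0 < c2 := by positivity
  refine ⟨c2, 2 * C1 * c1 ^ (η - α), hc20, by positivity, ?_⟩
  intro f hf hfp t ht
  set R : ℝ := c1 * t ^ (-(q / η)) with hR
  have hR0 : 0 < R := by positivity
  set s : ℝ := c2 * t ^ (q / p) with hs
  have hs0 : 0 < s := by positivity
  -- exponent identities
  have hRη : R ^ (η - α) = c1 ^ (η - α) * t ^ (1 - q / p) := by
    rw [hR, Real.mul_rpow hc10.le (by positivity), ← Real.rpow_mul ht.le]
    congr 2
    have : q * (1 / q) = q * (1 / p - (η - α) / η) := by rw [hpq]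
    rw [mul_one_div_cancel hq.ne'] at this
    rw [this]; ring
  have hRfar : D * R ^ (-(η / q)) = t / 4 := by
    rw [hR, Real.mul_rpow hc10.le (by positivity), ← Real.rpow_mul ht.le, hc1,
      ← Real.rpow_mul (by positivity)]
    have e1 : q / η * -(η / q) = -1 := by field_simp
    have e2 : -(q / η) * -(η / q) = 1 := by field_simp
    rw [e1, e2, Real.rpow_one, Real.rpow_neg_one]
    field_simp
  have hKx : ∀ x, Measurable (fun y => ENNReal.ofReal (d x y) ^ (-α)) := fun x =>
    (fi_K_meas hd α).comp (measurable_const.prodMk measurable_id)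
  have hsetx : ∀ x, MeasurableSet {y | d x y < R} := fun x =>
    measurableSet_lt (fi_ball_meas hd x) measurable_const
  -- far part
  have hpart1 : ∀ x, ∫⁻ y, (if d x y < R then 0 else f y * ENNReal.ofReal (d x y) ^ (-α)) ∂μ
      ≤ ENNReal.ofReal (t / 4) := by
    intro x
    have e : ∀ y, (if d x y < R then 0 else f y * ENNReal.ofReal (d x y) ^ (-α))
        = (f * fun y => (if d x y < R then 0 else ENNReal.ofReal (d x y) ^ (-α))) y := by
      intro y; simp only [Pi.mul_apply]; split_ifs <;> simp
    simp_rw [e]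
    refine (ENNReal.lintegral_mul_le_Lp_mul_Lq μ hconj hf.aemeasurable
      (Measurable.ite (hsetx x) measurable_const (hKx x)).aemeasurable).trans ?_
    have e2 : ∀ y, (if d x y < R then 0 else ENNReal.ofReal (d x y) ^ (-α)) ^ p'
        = (if d x y < R then 0 else ENNReal.ofReal (d x y) ^ (-(α * p'))) := by
      intro y
      split_ifs
      · exact ENNReal.zero_rpow_of_pos hp'0
      · rw [← ENNReal.rpow_mul]; congr 1; ring
    simp_rw [e2]
    calc _ ≤ (1:ℝ≥0∞) ^ (1 / p) * (ENNReal.ofReal (C2 * R ^ (η - α * p'))) ^ (1 / p') := by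
            gcongr
            exact hfar x R hR0
      _ = ENNReal.ofReal (t / 4) := by
            rw [ENNReal.one_rpow, one_mul, ENNReal.ofReal_rpow_of_nonneg (by positivity) (by positivity),
              Real.mul_rpow hC2.le (by positivity), ← Real.rpow_mul hR0.le, ← hRfar]
            congr 3
            have e3 : (η - α * p') * (1 / p') = η * (1 / p') - α := by field_simp
            have e4 : -(η / q) = - (η * (1 / q)) := by ring
            rw [e3, e4, hinv, hpq]
            field_simp
            ring
  -- near, small values
  have hpart2 : ∀ x, ∫⁻ y, (if d x y < R ∧ ¬ (ENNReal.ofReal s < f y) then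
      f y * ENNReal.ofReal (d x y) ^ (-α) else 0) ∂μ ≤ ENNReal.ofReal (t / 4) := by
    intro x
    calc _ ≤ ∫⁻ y, ENNReal.ofReal s * (if d x y < R then ENNReal.ofReal (d x y) ^ (-α) else 0) ∂μ := by
            refine lintegral_mono fun y => ?_
            simp only []
            by_cases h1 : d x y < R
            · by_cases h2 : ENNReal.ofReal s < f y
              · simp [h1, h2]
              · simp only [h1, h2, if_true, not_false_eq_true, and_true]
                gcongr
                exact not_lt.1 h2
            · simp [h1]
      _ ≤ ENNReal.ofReal s * ENNReal.ofReal (C1 * R ^ (η - α)) := by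
            rw [lintegral_const_mul _ (Measurable.ite (hsetx x) (hKx x) measurable_const)]
            gcongr
            exact hnear x R hR0
      _ = ENNReal.ofReal (t / 4) := by
            rw [← ENNReal.ofReal_mul hs0.le, hRη, hs, hc2, Real.rpow_sub ht, Real.rpow_one]
            congr 1
            field_simp
  set G : X → X → ℝ≥0∞ := fun x y => (if d x y < R ∧ ENNReal.ofReal s < f y then
      f y * ENNReal.ofReal (d x y) ^ (-α) else 0) with hG
  have hGm : Measurable (Function.uncurry G) := by
    refine Measurable.ite ?_ ((hf.comp measurable_snd).mul (fi_K_meas hd α)) measurable_const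
    exact (measurableSet_lt hd measurable_const).inter
      (measurableSet_lt measurable_const (hf.comp measurable_snd))
  have hsub : {x | ENNReal.ofReal t < ∫⁻ y, f y * ENNReal.ofReal (d x y) ^ (-α) ∂μ} ⊆
      {x | ENNReal.ofReal (t / 2) ≤ ∫⁻ y, G x y ∂μ} := by
    intro x hx
    simp only [Set.mem_ofPred_eq] at hx ⊢
    by_contra hcon
    rw [not_le] at hcon
    refine absurd hx (not_lt.2 ?_)
    have hm2 : Measurable (fun y => (if d x y < R ∧ ¬ (ENNReal.ofReal s < f y) then
      f y * ENNReal.ofReal (d x y) ^ (-α) else 0)) := by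
      refine Measurable.ite ?_ (hf.mul (hKx x)) measurable_const
      exact (hsetx x).inter (measurableSet_lt measurable_const hf).compl
    have hm1 : Measurable (fun y => (if d x y < R then 0 else
      f y * ENNReal.ofReal (d x y) ^ (-α))) :=
      Measurable.ite (hsetx x) measurable_const (hf.mul (hKx x))
    calc ∫⁻ y, f y * ENNReal.ofReal (d x y) ^ (-α) ∂μ
        = ∫⁻ y, ((if d x y < R then 0 else f y * ENNReal.ofReal (d x y) ^ (-α)) +
          ((if d x y < R ∧ ¬ (ENNReal.ofReal s < f y) then
            f y * ENNReal.ofReal (d x y) ^ (-α) else 0) + G x y)) ∂μ := by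
          congr 1; ext y
          simp only [hG]
          by_cases h1 : d x y < R <;> by_cases h2 : ENNReal.ofReal s < f y <;> simp [h1, h2]
      _ ≤ ENNReal.ofReal (t / 4) + (ENNReal.ofReal (t / 4) + ENNReal.ofReal (t / 2)) := by
          rw [lintegral_add_left hm1, lintegral_add_left hm2]
          gcongr
          · exact hpart1 x
          · exact hpart2 x
      _ = ENNReal.ofReal t := by
          rw [← ENNReal.ofReal_add (by positivity) (by positivity),
            ← ENNReal.ofReal_add (by positivity) (by positivity)]
          congr 1; ring
  have hGint : ∫⁻ x, ∫⁻ y, G x y ∂μ ∂μ ≤ ENNReal.ofReal (C1 * R ^ (η - α)) *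
      ∫⁻ y, (if ENNReal.ofReal s < f y then f y else 0) ∂μ := by
    rw [lintegral_lintegral_swap hGm.aemeasurable, ← lintegral_const_mul _
      (Measurable.ite (measurableSet_lt measurable_const hf) hf measurable_const)]
    refine lintegral_mono fun y => ?_
    calc ∫⁻ x, G x y ∂μ = ∫⁻ x, (if ENNReal.ofReal s < f y then f y else 0) *
            (if d y x < R then ENNReal.ofReal (d y x) ^ (-α) else 0) ∂μ := by
          congr 1; ext x
          simp only [hG, hsymm x y]
          by_cases h1 : d y x < R <;> by_cases h2 : ENNReal.ofReal s < f y <;> simp [h1, h2]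
      _ ≤ _ := by
          rw [lintegral_const_mul _ (Measurable.ite (hsetx y) (hKx y) measurable_const), mul_comm]
          gcongr
          exact hnear y R hR0
  calc _ ≤ μ {x | ENNReal.ofReal (t / 2) ≤ ∫⁻ y, G x y ∂μ} := measure_mono hsub
    _ ≤ (∫⁻ x, ∫⁻ y, G x y ∂μ ∂μ) / ENNReal.ofReal (t / 2) :=
        meas_ge_le_lintegral_div hGm.lintegral_prod_right'.aemeasurable
          (by simpa using ht) ENNReal.ofReal_ne_top
    _ ≤ (ENNReal.ofReal (C1 * R ^ (η - α)) *
      ∫⁻ y, (if ENNReal.ofReal s < f y then f y else 0) ∂μ) / ENNReal.ofReal (t / 2) := by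
        gcongr
    _ = _ := by
        rw [mul_comm, mul_div_assoc, ← ENNReal.ofReal_div_of_pos (by positivity), mul_comm]
        congr 2
        rw [hRη, Real.rpow_sub ht, Real.rpow_neg ht.le, Real.rpow_one]
        field_simp

lemma fi_hls1 {X : Type*} [MeasurableSpace X] {d : X → X → ℝ} {μ : Measure X} {η A : ℝ}
    (hd : Measurable fun p : X × X => d p.1 p.2) (h0 : ∀ x y, 0 ≤ d x y)
    (hsymm : ∀ x y, d x y = d y x)
    (hη : 0 < η) (hA0 : 0 < A)
    (hA : ∀ x : X, ∀ r : ℝ, 0 < r → μ {y | d x y < r} ≤ ENNReal.ofReal (A * r ^ η))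
    (α : ℝ) (hα : 0 < α) (hαη : α < η) (p q : ℝ) (hp : 1 < p) (hq : 0 < q)
    (hpq : 1 / q = 1 / p - (η - α) / η) :
    ∃ C : ℝ, 0 < C ∧ ∀ f : X → ℝ≥0∞, Measurable f → ∫⁻ y, f y ^ p ∂μ ≤ 1 →
      ∫⁻ x, (∫⁻ y, f y * ENNReal.ofReal (d x y) ^ (-α) ∂μ) ^ q ∂μ ≤ ENNReal.ofReal C := by
  haveI : SigmaFinite μ := fi_sigmaFinite hA
  obtain ⟨c, C, hc, hC, hlev⟩ := fi_level hd h0 hsymm hη hA0 hA α hα hαη p q hp hq hpq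
  have hp0 : 0 < p := by linarith
  set m : ℝ := q - q / p with hm
  have hm0 : 0 < m := by
    have : q / p < q := div_lt_self hq hp
    linarith
  refine ⟨q * C * ((1 / c) ^ (p - 1) / m), by positivity, fun f hf hfp => ?_⟩
  set F : X → ℝ≥0∞ := fun x => ∫⁻ y, f y * ENNReal.ofReal (d x y) ^ (-α) ∂μ with hF
  have hFm : Measurable F :=
    ((hf.comp measurable_snd).mul (fi_K_meas hd α)).lintegral_prod_right'
  have hmeas1 : Measurable (Function.uncurry fun (x : X) (t : ℝ) =>
      (if ENNReal.ofReal t < F x then ENNReal.ofReal (t ^ (q - 1)) else 0)) := by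
    refine Measurable.ite (measurableSet_lt measurable_snd.ennreal_ofReal (hFm.comp measurable_fst))
      ?_ measurable_const
    exact (measurable_snd.pow_const _).ennreal_ofReal
  have hmeas2 : Measurable (Function.uncurry fun (t : ℝ) (y : X) =>
      (if ENNReal.ofReal (c * t ^ (q / p)) < f y then f y * ENNReal.ofReal (t ^ (m - 1)) else 0)) := by
    refine Measurable.ite (measurableSet_lt
      ((measurable_fst.pow_const _).const_mul c).ennreal_ofReal (hf.comp measurable_snd))
      ?_ measurable_const
    exact (hf.comp measurable_snd).mul (measurable_fst.pow_const _).ennreal_ofReal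
  have hFq : ∀ x, F x ^ q = ENNReal.ofReal q * ∫⁻ t in Set.Ioi (0:ℝ),
      (if ENNReal.ofReal t < F x then ENNReal.ofReal (t ^ (q - 1)) else 0) := by
    intro x
    rw [fi_layer q hq, ENNReal.mul_div_cancel (by simpa using hq) ENNReal.ofReal_ne_top]
  have hinner : ∀ y, ∫⁻ t in Set.Ioi (0:ℝ), (if ENNReal.ofReal (c * t ^ (q / p)) < f y then
      f y * ENNReal.ofReal (t ^ (m - 1)) else 0) = ENNReal.ofReal ((1 / c) ^ (p - 1) / m) * f y ^ p := by
    intro y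
    calc _ = ∫⁻ t in Set.Ioi (0:ℝ), f y * (if ENNReal.ofReal t < (ENNReal.ofReal (1 / c) * f y) ^ (p / q)
            then ENNReal.ofReal (t ^ (m - 1)) else 0) := by
          refine setLIntegral_congr_fun measurableSet_Ioi fun t ht => ?_
          rw [Set.mem_Ioi] at ht
          have hiff : ENNReal.ofReal (c * t ^ (q / p)) < f y ↔
              ENNReal.ofReal t < (ENNReal.ofReal (1 / c) * f y) ^ (p / q) := by
            have hqp : 0 < p / q := by positivity
            have e1 : ENNReal.ofReal t = (ENNReal.ofReal (1 / c) * ENNReal.ofReal (c * t ^ (q / p))) ^ (p / q) := by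
              rw [← ENNReal.ofReal_mul (by positivity), ENNReal.ofReal_rpow_of_nonneg (by positivity) hqp.le]
              congr 1
              have e2 : 1 / c * (c * t ^ (q / p)) = t ^ (q / p) := by field_simp
              have e3 : q / p * (p / q) = 1 := by field_simp
              rw [e2, ← Real.rpow_mul ht.le, e3, Real.rpow_one]
            conv_rhs => rw [e1]
            rw [ENNReal.rpow_lt_rpow_iff hqp,
              ENNReal.mul_lt_mul_iff_right (by simpa using hc) ENNReal.ofReal_ne_top]
          simp only [hiff]
          split_ifs <;> simp
      _ = f y * ((ENNReal.ofReal (1 / c) * f y) ^ (p / q)) ^ m / ENNReal.ofReal m := by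
          rw [lintegral_const_mul _ (Measurable.ite
            (measurableSet_lt ENNReal.measurable_ofReal measurable_const)
            (by fun_prop) measurable_const), fi_layer m hm0, mul_div_assoc]
      _ = _ := by
          have e1 : p / q * m = p - 1 := by rw [hm]; field_simp
          rw [← ENNReal.rpow_mul, e1, ENNReal.mul_rpow_of_nonneg _ _ (by linarith),
            ENNReal.ofReal_rpow_of_pos (by positivity), ENNReal.ofReal_div_of_pos hm0]
          have e2 : f y ^ p = f y * f y ^ (p - 1) := by
            have : p = 1 + (p - 1) := by ring
            conv_lhs => rw [this]
            rw [ENNReal.rpow_add_of_nonneg _ _ (by norm_num) (by linarith), ENNReal.rpow_one]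
          rw [e2]
          simp only [div_eq_mul_inv]
          ring
  calc ∫⁻ x, F x ^ q ∂μ
      = ENNReal.ofReal q * ∫⁻ t in Set.Ioi (0:ℝ), ∫⁻ x,
        (if ENNReal.ofReal t < F x then ENNReal.ofReal (t ^ (q - 1)) else 0) ∂μ := by
        simp_rw [hFq]
        rw [lintegral_const_mul _ (Measurable.lintegral_prod_right hmeas1), lintegral_lintegral_swap hmeas1.aemeasurable]
    _ ≤ ENNReal.ofReal q * ∫⁻ t in Set.Ioi (0:ℝ), ENNReal.ofReal C * ∫⁻ y,
        (if ENNReal.ofReal (c * t ^ (q / p)) < f y then f y * ENNReal.ofReal (t ^ (m - 1)) else 0) ∂μ := by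
        gcongr 1
        refine setLIntegral_mono' measurableSet_Ioi fun t ht => ?_
        rw [Set.mem_Ioi] at ht
        have hfs : Measurable (fun y => (if ENNReal.ofReal (c * t ^ (q / p)) < f y then f y else 0)) :=
          Measurable.ite (measurableSet_lt measurable_const hf) hf measurable_const
        calc ∫⁻ x, (if ENNReal.ofReal t < F x then ENNReal.ofReal (t ^ (q - 1)) else 0) ∂μ
            = ENNReal.ofReal (t ^ (q - 1)) * μ {x | ENNReal.ofReal t < F x} := by
              rw [← lintegral_indicator_const (measurableSet_lt measurable_const hFm)]
              refine lintegral_congr fun x => ?_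
              simp [Set.indicator]
          _ ≤ ENNReal.ofReal (t ^ (q - 1)) * (ENNReal.ofReal (C * t ^ (-(q / p))) *
              ∫⁻ y, (if ENNReal.ofReal (c * t ^ (q / p)) < f y then f y else 0) ∂μ) := by
              gcongr
              exact hlev f hf hfp t ht
          _ = ENNReal.ofReal C * ∫⁻ y, (if ENNReal.ofReal (c * t ^ (q / p)) < f y then f y else 0) *
                ENNReal.ofReal (t ^ (m - 1)) ∂μ := by
              rw [lintegral_mul_const _ hfs, ← mul_assoc, ← ENNReal.ofReal_mul (by positivity)]
              have e : t ^ (q - 1) * (C * t ^ (-(q / p))) = C * t ^ (m - 1) := by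
                have : m - 1 = (q - 1) + (-(q / p)) := by rw [hm]; ring
                rw [this, Real.rpow_add ht]; ring
              rw [e, ENNReal.ofReal_mul hC.le]
              ring
          _ = _ := by
              congr 2; ext y
              split_ifs <;> simp
    _ = ENNReal.ofReal q * (ENNReal.ofReal C *
          (ENNReal.ofReal ((1 / c) ^ (p - 1) / m) * ∫⁻ y, f y ^ p ∂μ)) := by
        rw [lintegral_const_mul _ (Measurable.lintegral_prod_right hmeas2), lintegral_lintegral_swap hmeas2.aemeasurable]
        simp_rw [hinner]
        rw [lintegral_const_mul _ (hf.pow_const p)]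
    _ ≤ ENNReal.ofReal q * (ENNReal.ofReal C *
          (ENNReal.ofReal ((1 / c) ^ (p - 1) / m) * 1)) := by gcongr
    _ = _ := by
        rw [mul_one, ← ENNReal.ofReal_mul hC.le, ← ENNReal.ofReal_mul hq.le, mul_assoc]

lemma fi_hls {X : Type*} [MeasurableSpace X] {d : X → X → ℝ} {μ : Measure X} {η A : ℝ}
    (hd : Measurable fun p : X × X => d p.1 p.2) (h0 : ∀ x y, 0 ≤ d x y)
    (hsymm : ∀ x y, d x y = d y x)
    (hη : 0 < η) (hA0 : 0 < A)
    (hA : ∀ x : X, ∀ r : ℝ, 0 < r → μ {y | d x y < r} ≤ ENNReal.ofReal (A * r ^ η))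
    (α : ℝ) (hα : 0 < α) (hαη : α < η) (p q : ℝ) (hp : 1 < p) (hq : 0 < q)
    (hpq : 1 / q = 1 / p - (η - α) / η) :
    ∃ C : ℝ, 0 < C ∧ ∀ f : X → ℝ≥0∞, Measurable f →
      lpNorm μ q (fun x => ∫⁻ y, f y * ENNReal.ofReal (d x y) ^ (-α) ∂μ)
        ≤ ENNReal.ofReal C * lpNorm μ p f := by
  haveI : SigmaFinite μ := fi_sigmaFinite hA
  obtain ⟨C, hC, hh⟩ := fi_hls1 hd h0 hsymm hη hA0 hA α hα hαη p q hp hq hpq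
  have hp0 : 0 < p := by linarith
  refine ⟨C ^ (1 / q), by positivity, fun f hf => ?_⟩
  by_cases hN0 : lpNorm μ p f = 0
  · have h1 : ∫⁻ x, f x ^ p ∂μ = 0 := by
      unfold _root_.lpNorm at hN0
      rw [ENNReal.rpow_eq_zero_iff_of_pos (by positivity)] at hN0
      exact hN0
    rw [lintegral_eq_zero_iff (hf.pow_const p)] at h1
    have h2 : ∀ x, ∫⁻ y, f y * ENNReal.ofReal (d x y) ^ (-α) ∂μ = 0 := by
      intro x
      rw [← lintegral_zero (μ := μ)]
      refine lintegral_congr_ae ?_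
      filter_upwards [h1] with y hy
      have : f y = 0 := by
        simpa [ENNReal.rpow_eq_zero_iff, hp0, hp0.not_gt] using hy
      simp [this]
    unfold _root_.lpNorm
    simp only [h2]
    rw [ENNReal.zero_rpow_of_pos hq, lintegral_zero, ENNReal.zero_rpow_of_pos (by positivity)]
    exact zero_le
  by_cases hNt : lpNorm μ p f = ⊤
  · rw [hNt, ENNReal.mul_top (by simpa using (by positivity : 0 < C ^ (1 / q)))]
    exact le_top
  set N := lpNorm μ p f with hN
  have hNp : ∫⁻ y, f y ^ p ∂μ = N ^ p := by
    rw [hN, _root_.lpNorm, ← ENNReal.rpow_mul, one_div_mul_cancel hp0.ne', ENNReal.rpow_one]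
  have hg := hh (fun y => N⁻¹ * f y) (hf.const_mul _) (by
    simp_rw [ENNReal.mul_rpow_of_nonneg _ _ hp0.le]
    rw [lintegral_const_mul _ (hf.pow_const p), hNp, ← ENNReal.mul_rpow_of_nonneg _ _ hp0.le,
      ENNReal.inv_mul_cancel hN0 hNt, ENNReal.one_rpow])
  set F : X → ℝ≥0∞ := fun x => ∫⁻ y, f y * ENNReal.ofReal (d x y) ^ (-α) ∂μ with hF
  have hFm : Measurable F :=
    ((hf.comp measurable_snd).mul (fi_K_meas hd α)).lintegral_prod_right'
  have e1 : ∀ x, ∫⁻ y, N⁻¹ * f y * ENNReal.ofReal (d x y) ^ (-α) ∂μ = N⁻¹ * F x := by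
    intro x
    simp_rw [mul_assoc]
    rw [lintegral_const_mul]
    exact hf.mul ((fi_K_meas hd α).comp (measurable_const.prodMk measurable_id))
  simp_rw [e1, ENNReal.mul_rpow_of_nonneg _ _ hq.le] at hg
  rw [lintegral_const_mul _ (hFm.pow_const q)] at hg
  have h3 := ENNReal.rpow_le_rpow hg (by positivity : 0 ≤ 1 / q)
  rw [ENNReal.mul_rpow_of_nonneg _ _ (by positivity), ← ENNReal.rpow_mul, mul_one_div_cancel hq.ne',
    ENNReal.rpow_one, ENNReal.ofReal_rpow_of_pos hC] at h3
  change N⁻¹ * lpNorm μ q F ≤ _ at h3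
  rw [mul_comm, ← div_eq_mul_inv, ENNReal.div_le_iff hN0 hNt] at h3
  exact h3

/-- Case `B_σ`: `‖I_{η-γ/2}(f · I_{η-γ/2}g)‖_{p₃} ≤ C ‖f‖_{p₁} ‖g‖_{p₂}` when
`0 < 1/p₁ < 1`, `σ < 1/p₂ < 1`, `2σ < 1/p₁ + 1/p₂ < 1 + σ` and
`1/p₃ = 1/p₁ + 1/p₂ - 2σ`, with `σ = (2η-γ)/(2η)`. -/
theorem statement2 {X : Type*} [MeasurableSpace X]
    (d : X → X → ℝ) (κ : ℝ) (hκ : 1 ≤ κ) (hqm : IsQuasiMetric d κ)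
    (hd_meas : Measurable fun p : X × X => d p.1 p.2)
    (μ : Measure X) (η : ℝ) (hη : 0 < η)
    (a A : ℝ) (ha : 0 < a) (haA : a ≤ A) (hAhl : IsAhlfors d μ η a A)
    (γ : ℝ) (hγ0 : 0 < γ) (hγ2η : γ < 2 * η)
    (σ : ℝ) (hσ : σ = (2 * η - γ) / (2 * η))
    (p₁ p₂ p₃ : ℝ)
    (hp₁l : 0 < 1 / p₁) (hp₁u : 1 / p₁ < 1)
    (hp₂l : σ < 1 / p₂) (hp₂u : 1 / p₂ < 1)
    (hsum_l : 2 * σ < 1 / p₁ + 1 / p₂) (hsum_u : 1 / p₁ + 1 / p₂ < 1 + σ)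
    (hp₃ : 1 / p₃ = 1 / p₁ + 1 / p₂ - 2 * σ) :
    ∃ C : ℝ, 0 < C ∧ ∀ f g : X → ℝ≥0∞, Measurable f → Measurable g →
      lpNorm μ p₁ f ≠ ⊤ → lpNorm μ p₂ g ≠ ⊤ →
      lpNorm μ p₃
          (fracInt d μ (η - γ / 2) η
            (fun x => f x * fracInt d μ (η - γ / 2) η g x)) ≤
        ENNReal.ofReal C * lpNorm μ p₁ f * lpNorm μ p₂ g := by
  have hA : ∀ x : X, ∀ r : ℝ, 0 < r → μ {y | d x y < r} ≤ ENNReal.ofReal (A * r ^ η) :=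
    fun x r hr => (hAhl x r hr).2
  haveI : SigmaFinite μ := fi_sigmaFinite hA
  obtain ⟨h0, -, hsymm, -⟩ := hqm
  have hσ' : σ = (η - γ / 2) / η := by rw [hσ]; field_simp
  have hσ0 : 0 < σ := by rw [hσ']; exact div_pos (by linarith) hη
  have hp₁0 : 0 < p₁ := one_div_pos.1 hp₁l
  have hp₂0 : 0 < p₂ := one_div_pos.1 (hσ0.trans hp₂l)
  have hp₂1 : 1 < p₂ := by rwa [div_lt_one hp₂0] at hp₂u
  have hp₃0 : 0 < p₃ := one_div_pos.1 (by linarith)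
  set q : ℝ := 1 / (1 / p₂ - σ) with hq
  have hq0 : 0 < q := one_div_pos.2 (by linarith)
  have hq' : 1 / q = 1 / p₂ - σ := by rw [hq, one_div_one_div]
  set r : ℝ := 1 / (1 / p₁ + 1 / p₂ - σ) with hr
  have hr' : 1 / r = 1 / p₁ + 1 / p₂ - σ := by rw [hr, one_div_one_div]
  have hr0 : 0 < r := one_div_pos.2 (by linarith)
  have hr1 : 1 < r := by
    have : 1 / r < 1 := by linarith
    rwa [div_lt_one hr0] at this
  obtain ⟨C1, hC1, H1⟩ := fi_hls hd_meas h0 hsymm hη (ha.trans_le haA) hA (γ / 2) (by linarith)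
    (by linarith) p₂ q hp₂1 hq0 (by rw [hq', hσ'])
  obtain ⟨C2, hC2, H2⟩ := fi_hls hd_meas h0 hsymm hη (ha.trans_le haA) hA (γ / 2) (by linarith)
    (by linarith) r p₃ hr1 hp₃0 (by rw [hp₃, hr', ← hσ']; ring)
  refine ⟨C2 * C1, by positivity, fun f g hf hg _ _ => ?_⟩
  have hexp : η - γ / 2 - η = -(γ / 2) := by ring
  have hI : ∀ h : X → ℝ≥0∞, fracInt d μ (η - γ / 2) η h =
      fun x => ∫⁻ y, h y * ENNReal.ofReal (d x y) ^ (-(γ / 2)) ∂μ := by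
    intro h; ext x; rw [fracInt, hexp]
  have hGm : Measurable (fracInt d μ (η - γ / 2) η g) := by
    rw [hI]
    exact ((hg.comp measurable_snd).mul (fi_K_meas hd_meas _)).lintegral_prod_right'
  have K1 := H1 g hg
  rw [← hI] at K1
  have K2 := H2 (fun x => f x * fracInt d μ (η - γ / 2) η g x) (hf.mul hGm)
  rw [← hI] at K2
  have hH : lpNorm μ r (fun x => f x * fracInt d μ (η - γ / 2) η g x) ≤
      lpNorm μ p₁ f * lpNorm μ q (fracInt d μ (η - γ / 2) η g) := by
    have hrp : r < p₁ := by
      rw [← one_div_lt_one_div hp₁0 hr0, hr']; linarith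
    exact ENNReal.lintegral_Lp_mul_le_Lq_mul_Lr hr0
      hrp (by rw [hr', hq']; ring) μ hf.aemeasurable hGm.aemeasurable
  calc _ ≤ _ := K2
    _ ≤ ENNReal.ofReal C2 * (lpNorm μ p₁ f * (ENNReal.ofReal C1 * lpNorm μ p₂ g)) := by
        gcongr
        exact hH.trans (by gcongr)
    _ = _ := by
        rw [ENNReal.ofReal_mul hC2.le]; ring
end

section
/- Let (X,d,μ) be an η-Ahlfors regular quasi-metric measure space with η > 0 and triangular constant κ ≥ 1, let 0 < γ < 2η and set σ = (2η−γ)/(2η). Suppose p₁, p₂, p₃ satisfy σ < 1/p₁ < 1, 0 < 1/p₂ < 1, 2σ < 1/p₁ + 1/p₂ < 1 + σ and 1/p₃ = 1/p₁ + 1/p₂ − 2σ. Then there exists C > 0 such that ‖I_{η−γ/2}(g · I_{η−γ/2}f)‖_{L^{p₃}(μ)} ≤ C ‖f‖_{L^{p₁}(μ)} ‖g‖_{L^{p₂}(μ)} for every f ∈ L^{p₁}(X,μ) and g ∈ L^{p₂}(X,μ) nonnegative. -/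
open MeasureTheory ENNReal

lemma annuli_bound {X : Type*} [MeasurableSpace X] (d : X → X → ℝ) (μ : Measure X)
    (hm : ∀ x, Measurable (d x)) (η A : ℝ) (hA : 0 < A)
    (hU : ∀ x r, 0 < r → μ {y | d x y < r} ≤ ENNReal.ofReal (A * r ^ η))
    (θ : ℝ) (hθ : 0 < θ) (b c e : ℝ) (hb : 0 < b) (hc : 0 < c) (he : 0 < e)
    (hb1 : b ^ (η - θ) < 1) (x : X) (R : ℝ) (hR : 0 < R) (S : Set X)
    (hS : ∀ y ∈ S, ∃ k : ℕ, R * c * b ^ k ≤ d x y ∧ d x y < R * e * b ^ k) :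
    ∫⁻ y in S, ENNReal.ofReal (d x y) ^ (-θ) ∂μ ≤
      ENNReal.ofReal (A * c ^ (-θ) * e ^ η * (1 - b ^ (η - θ))⁻¹ * R ^ (η - θ)) := by
  let T : ℕ → Set X := fun k => {y | R * c * b ^ k ≤ d x y ∧ d x y < R * e * b ^ k}
  have hT : ∀ k, MeasurableSet (T k) := fun k =>
    (measurableSet_le measurable_const (hm x)).inter (measurableSet_lt (hm x) measurable_const)
  have hsub : S ⊆ ⋃ k, T k := fun y hy => Set.mem_iUnion.2 (hS y hy)
  have hterm : ∀ k, ∫⁻ y in T k, ENNReal.ofReal (d x y) ^ (-θ) ∂μ ≤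
      ENNReal.ofReal (A * c ^ (-θ) * e ^ η * R ^ (η - θ) * (b ^ (η - θ)) ^ k) := by
    intro k
    have hmk : 0 < R * c * b ^ k := by positivity
    have hrk : 0 < R * e * b ^ k := by positivity
    calc ∫⁻ y in T k, ENNReal.ofReal (d x y) ^ (-θ) ∂μ
        ≤ ∫⁻ y in T k, ENNReal.ofReal ((R * c * b ^ k) ^ (-θ)) ∂μ := by
          refine setLIntegral_mono' (hT k) fun y hy => ?_
          rw [← ENNReal.ofReal_rpow_of_pos hmk, ENNReal.rpow_neg, ENNReal.rpow_neg]
          exact ENNReal.inv_le_inv.2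
            (ENNReal.rpow_le_rpow (ENNReal.ofReal_le_ofReal hy.1) hθ.le)
      _ = ENNReal.ofReal ((R * c * b ^ k) ^ (-θ)) * μ (T k) := by
          rw [setLIntegral_const]
      _ ≤ ENNReal.ofReal ((R * c * b ^ k) ^ (-θ)) * ENNReal.ofReal (A * (R * e * b ^ k) ^ η) := by
          gcongr
          exact (measure_mono fun y hy => hy.2).trans (hU x _ hrk)
      _ = _ := by
          rw [← ENNReal.ofReal_mul (by positivity)]
          congr 1
          have h1 : (b ^ (η - θ)) ^ k = (b ^ k) ^ (-θ) * (b ^ k) ^ η := by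
            rw [← Real.rpow_add (by positivity), ← Real.rpow_natCast, ← Real.rpow_natCast,
              ← Real.rpow_mul hb.le, ← Real.rpow_mul hb.le]
            congr 1; ring
          have h2 : R ^ (η - θ) = R ^ (-θ) * R ^ η := by
            rw [← Real.rpow_add hR]; congr 1; ring
          rw [h1, h2, Real.mul_rpow (by positivity) (by positivity),
            Real.mul_rpow (by positivity) (by positivity),
            Real.mul_rpow (by positivity) (by positivity),
            Real.mul_rpow (by positivity) (by positivity)]
          ring
  have hb0 : 0 ≤ b ^ (η - θ) := by positivity
  calc ∫⁻ y in S, ENNReal.ofReal (d x y) ^ (-θ) ∂μ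
      ≤ ∫⁻ y in ⋃ k, T k, ENNReal.ofReal (d x y) ^ (-θ) ∂μ := lintegral_mono_set hsub
    _ ≤ ∑' k, ∫⁻ y in T k, ENNReal.ofReal (d x y) ^ (-θ) ∂μ := lintegral_iUnion_le _ _
    _ ≤ ∑' k, ENNReal.ofReal (A * c ^ (-θ) * e ^ η * R ^ (η - θ) * (b ^ (η - θ)) ^ k) :=
        ENNReal.tsum_le_tsum hterm
    _ = _ := by
        rw [← ENNReal.ofReal_tsum_of_nonneg (fun k => by positivity)
          ((summable_geometric_of_lt_one hb0 hb1).mul_left _), tsum_mul_left,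
          tsum_geometric_of_lt_one hb0 hb1]
        congr 1; ring

lemma near_bound {X : Type*} [MeasurableSpace X] (d : X → X → ℝ) (μ : Measure X)
    (h0 : ∀ x y, 0 ≤ d x y)
    (hm : ∀ x, Measurable (d x)) (η A : ℝ) (hA : 0 < A)
    (hU : ∀ x r, 0 < r → μ {y | d x y < r} ≤ ENNReal.ofReal (A * r ^ η))
    (θ : ℝ) (hθ : 0 < θ) (hθη : θ < η) :
    ∃ C : ℝ, 0 < C ∧ ∀ x R, 0 < R → ∫⁻ y in {y | d x y < R}, ENNReal.ofReal (d x y) ^ (-θ) ∂μ ≤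
      ENNReal.ofReal (C * R ^ (η - θ)) := by
  have hb1 : (1 / 2 : ℝ) ^ (η - θ) < 1 :=
    Real.rpow_lt_one (by norm_num) (by norm_num) (by linarith)
  have hb2 : 0 < 1 - (1 / 2 : ℝ) ^ (η - θ) := by linarith
  refine ⟨A * (1 / 2 : ℝ) ^ (-θ) * 2 ^ η * (1 - (1 / 2 : ℝ) ^ (η - θ))⁻¹, by positivity, ?_⟩
  intro x R hR
  have hnull : μ {y | d x y = 0} = 0 := by
    have ht : Filter.Tendsto (fun r : ℝ => ENNReal.ofReal (A * r ^ η))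
        (nhdsWithin 0 (Set.Ioi 0)) (nhds 0) := by
      have : Filter.Tendsto (fun r : ℝ => ENNReal.ofReal (A * r ^ η)) (nhds 0)
          (nhds (ENNReal.ofReal (A * 0 ^ η))) := by
        refine ENNReal.tendsto_ofReal (Filter.Tendsto.const_mul _ ?_)
        exact (Real.continuousAt_rpow_const 0 η (Or.inr (by linarith))).tendsto
      rw [Real.zero_rpow (by linarith), mul_zero, ENNReal.ofReal_zero] at this
      exact this.mono_left nhdsWithin_le_nhds
    refine le_antisymm (ge_of_tendsto ht ?_) (zero_le)
    filter_upwards [self_mem_nhdsWithin] with r hr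
    refine (measure_mono fun y hy => ?_).trans (hU x r hr)
    simp only [Set.mem_ofPred_eq] at hy ⊢
    rw [hy]; exact hr
  have hsub : {y | d x y < R} ⊆ {y | d x y = 0} ∪ {y | 0 < d x y ∧ d x y < R} := by
    intro y hy
    rcases (h0 x y).eq_or_lt with h | h
    · exact Or.inl h.symm
    · exact Or.inr ⟨h, hy⟩
  refine (lintegral_mono_set hsub).trans ((lintegral_union_le _ _ _).trans ?_)
  rw [setLIntegral_measure_zero _ _ hnull, zero_add]
  refine annuli_bound d μ hm η A hA hU θ hθ (1 / 2) (1 / 2) 2 (by norm_num) (by norm_num)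
    (by norm_num) hb1 x R hR _ ?_
  rintro y ⟨hy0, hyR⟩
  obtain ⟨n, hn1, hn2⟩ := exists_nat_pow_near_of_lt_one (x := d x y / R) (y := (1 / 2 : ℝ))
    (by positivity) ((div_le_one hR).2 hyR.le) (by norm_num) (by norm_num)
  rw [lt_div_iff₀ hR] at hn1
  rw [div_le_iff₀ hR] at hn2
  refine ⟨n, ?_, ?_⟩
  · rw [pow_succ] at hn1; nlinarith
  · have : 0 < (1 / 2 : ℝ) ^ n * R := by positivity
    nlinarith

lemma far_bound {X : Type*} [MeasurableSpace X] (d : X → X → ℝ) (μ : Measure X)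
    (hm : ∀ x, Measurable (d x)) (η A : ℝ) (hA : 0 < A) (hη : 0 < η)
    (hU : ∀ x r, 0 < r → μ {y | d x y < r} ≤ ENNReal.ofReal (A * r ^ η))
    (θ : ℝ) (hθη : η < θ) :
    ∃ C : ℝ, 0 < C ∧ ∀ x R, 0 < R → ∫⁻ y in {y | R ≤ d x y}, ENNReal.ofReal (d x y) ^ (-θ) ∂μ ≤
      ENNReal.ofReal (C * R ^ (η - θ)) := by
  have hb1 : (2 : ℝ) ^ (η - θ) < 1 :=
    Real.rpow_lt_one_of_one_lt_of_neg (by norm_num) (by linarith)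
  have hb2 : 0 < 1 - (2 : ℝ) ^ (η - θ) := by linarith
  refine ⟨A * 1 ^ (-θ) * 2 ^ η * (1 - (2 : ℝ) ^ (η - θ))⁻¹, by positivity, ?_⟩
  intro x R hR
  refine annuli_bound d μ hm η A hA hU θ (by linarith) 2 1 2 (by norm_num) (by norm_num)
    (by norm_num) hb1 x R hR _ ?_
  intro y hy
  obtain ⟨n, hn1, hn2⟩ := exists_nat_pow_near (x := d x y / R) (y := (2 : ℝ))
    ((one_le_div hR).2 hy) (by norm_num)
  rw [le_div_iff₀ hR] at hn1
  rw [div_lt_iff₀ hR] at hn2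
  refine ⟨n, ?_, ?_⟩
  · nlinarith
  · rw [pow_succ] at hn2; nlinarith

lemma far_holder {X : Type*} [MeasurableSpace X] (d : X → X → ℝ) (μ : Measure X)
    (hm : ∀ x, Measurable (d x)) (η A : ℝ) (hA : 0 < A) (hη : 0 < η)
    (hU : ∀ x r, 0 < r → μ {y | d x y < r} ≤ ENNReal.ofReal (A * r ^ η))
    (θ p q : ℝ) (hp : 1 < p) (hq : 0 < q)
    (hpq : η / q = η / p - η + θ) :
    ∃ K : ℝ, 0 < K ∧ ∀ f : X → ℝ≥0∞, Measurable f → ∫⁻ y, f y ^ p ∂μ ≤ 1 →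
      ∀ x R, 0 < R → ∫⁻ y in {y | R ≤ d x y}, f y * ENNReal.ofReal (d x y) ^ (-θ) ∂μ ≤
      ENNReal.ofReal (K * R ^ (-(η / q))) := by
  have hp0 : 0 < p := by linarith
  obtain ⟨p', hpp⟩ : ∃ p', p.HolderConjugate p' := ⟨_, Real.HolderConjugate.conjExponent hp⟩
  have hp' : 0 < p' := hpp.symm.pos
  have hinv : 1 / p' = 1 - 1 / p := by
    have := hpp.inv_add_inv_eq_one
    simp only [one_div]; linarith
  have hq' : 0 < η / q := by positivity
  have hθp : η < θ * p' := by
    have : η * (1 / p') < θ := by rw [hinv]; ring_nf; ring_nf at hpq hq'; linarith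
    rw [mul_one_div, div_lt_iff₀ hp'] at this
    exact this
  obtain ⟨C, hC, hCb⟩ := far_bound d μ hm η A hA hη hU (θ * p') hθp
  refine ⟨C ^ (1 / p'), by positivity, ?_⟩
  intro f hf hf1 x R hR
  have hD : Measurable fun y => ENNReal.ofReal (d x y) ^ (-θ) :=
    (ENNReal.measurable_ofReal.comp (hm x)).pow_const _
  have := ENNReal.lintegral_mul_le_Lp_mul_Lq (μ.restrict {y | R ≤ d x y}) hpp
    hf.aemeasurable hD.aemeasurable
  refine this.trans ?_
  have h1 : (∫⁻ y in {y | R ≤ d x y}, f y ^ p ∂μ) ^ (1 / p) ≤ 1 :=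
    ENNReal.rpow_le_one ((setLIntegral_le_lintegral _ _).trans hf1) (by positivity)
  have h2 : (∫⁻ y in {y | R ≤ d x y}, (ENNReal.ofReal (d x y) ^ (-θ)) ^ p' ∂μ) ^ (1 / p') ≤
      ENNReal.ofReal (C ^ (1 / p') * R ^ (-(η / q))) := by
    have h3 := ENNReal.rpow_le_rpow (hCb x R hR) (z := 1 / p') (by positivity)
    simp only [← ENNReal.rpow_mul, neg_mul] at h3 ⊢
    refine h3.trans (le_of_eq ?_)
    rw [ENNReal.ofReal_rpow_of_pos (by positivity), Real.mul_rpow (by positivity) (by positivity),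
      ← Real.rpow_mul hR.le]
    congr 3
    have : p' * (1 / p') = 1 := by field_simp
    calc (η - θ * p') * (1 / p') = η * (1 / p') - θ * (p' * (1 / p')) := by ring
      _ = -(η / q) := by rw [this, hinv, hpq]; ring
  calc _ ≤ 1 * ENNReal.ofReal (C ^ (1 / p') * R ^ (-(η / q))) := mul_le_mul' h1 h2
    _ = _ := one_mul _

lemma pointwise_bound {X : Type*} [MeasurableSpace X] (d : X → X → ℝ) (μ : Measure X)
    (h0 : ∀ x y, 0 ≤ d x y)
    (hm : ∀ x, Measurable (d x)) (η : ℝ) (hη : 0 < η)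
    (θ p q K₁ K₂ : ℝ) (hp : 1 < p) (hq : 1 < q) (hK₁ : 0 < K₁) (hK₂ : 0 < K₂)
    (hpq : η / q = η / p - η + θ)
    (hnear : ∀ x R, 0 < R → ∫⁻ y in {y | d x y < R}, ENNReal.ofReal (d x y) ^ (-θ) ∂μ ≤
      ENNReal.ofReal (K₁ * R ^ (η - θ)))
    (f : X → ℝ≥0∞) (hf : Measurable f)
    (hfar : ∀ x R, 0 < R → ∫⁻ y in {y | R ≤ d x y}, f y * ENNReal.ofReal (d x y) ^ (-θ) ∂μ ≤
      ENNReal.ofReal (K₂ * R ^ (-(η / q)))) (x : X) :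
    (∫⁻ y, f y * ENNReal.ofReal (d x y) ^ (-θ) ∂μ) ^ q ≤
      ENNReal.ofReal (2 * (4 * K₂) ^ (q - 1)) * ∫⁻ y, f y * (ENNReal.ofReal (d x y) ^ (-θ) *
        min (ENNReal.ofReal (d x y) ^ (-(η / q))) ((ENNReal.ofReal (K₁ / K₂) * f y) ^ (p / q))
          ^ (q - 1)) ∂μ := by
  have hq0 : 0 < q := by linarith
  have hp0 : 0 < p := by linarith
  have hηq : 0 < η / q := by positivity
  set G := ∫⁻ y, f y * (ENNReal.ofReal (d x y) ^ (-θ) *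
        min (ENNReal.ofReal (d x y) ^ (-(η / q))) ((ENNReal.ofReal (K₁ / K₂) * f y) ^ (p / q))
          ^ (q - 1)) ∂μ with hG
  set u := ∫⁻ y, f y * ENNReal.ofReal (d x y) ^ (-θ) ∂μ with hu
  rw [← ENNReal.le_rpow_inv_iff hq0]
  refine ENNReal.le_of_forall_nnreal_lt fun t ht => ?_
  rw [ENNReal.le_rpow_inv_iff hq0]
  rcases (zero_le : 0 ≤ t).eq_or_lt with rfl | ht0
  · simp [hq0]
  -- set up
  obtain ⟨R, hR, hRt⟩ : ∃ R : ℝ, 0 < R ∧ (t : ℝ) = 4 * K₂ * R ^ (-(η / q)) := by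
    have ht0' : (0:ℝ) < t := ht0
    refine ⟨(t / (4 * K₂)) ^ (-(η / q))⁻¹, by positivity, ?_⟩
    rw [← Real.rpow_mul (by positivity), inv_mul_cancel₀ (by linarith), Real.rpow_one]
    field_simp
  have htE : (t : ℝ≥0∞) = ENNReal.ofReal (4 * K₂ * R ^ (-(η / q))) := by
    rw [← hRt, ENNReal.ofReal_coe_nnreal]
  set τ := R ^ (-(η / q)) with hτ
  have hτ0 : 0 < τ := by positivity
  set s := K₂ / K₁ * R ^ (-(η / p)) with hs
  have hs0 : 0 < s := by positivity
  set B := {y | d x y < R} with hB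
  have hBm : MeasurableSet B := measurableSet_lt (hm x) measurable_const
  have hBc : Bᶜ = {y | R ≤ d x y} := by ext y; simp [hB]
  set S := {y | ENNReal.ofReal s < f y} with hS
  have hSm : MeasurableSet S := measurableSet_lt measurable_const hf
  have hD : Measurable fun y => ENNReal.ofReal (d x y) ^ (-θ) :=
    (ENNReal.measurable_ofReal.comp (hm x)).pow_const _
  have hfarx := hfar x R hR
  have hsmall : ∫⁻ y in B \ S, f y * ENNReal.ofReal (d x y) ^ (-θ) ∂μ ≤
      ENNReal.ofReal (K₂ * τ) := by
    calc ∫⁻ y in B \ S, f y * ENNReal.ofReal (d x y) ^ (-θ) ∂μ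
        ≤ ∫⁻ y in B \ S, ENNReal.ofReal s * ENNReal.ofReal (d x y) ^ (-θ) ∂μ := by
          refine setLIntegral_mono' (hBm.diff hSm) fun y hy => ?_
          gcongr
          exact not_lt.1 hy.2
      _ ≤ ∫⁻ y in B, ENNReal.ofReal s * ENNReal.ofReal (d x y) ^ (-θ) ∂μ :=
          lintegral_mono_set Set.sdiff_subset
      _ = ENNReal.ofReal s * ∫⁻ y in B, ENNReal.ofReal (d x y) ^ (-θ) ∂μ :=
          lintegral_const_mul _ hD
      _ ≤ ENNReal.ofReal s * ENNReal.ofReal (K₁ * R ^ (η - θ)) := by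
          gcongr; exact hnear x R hR
      _ = _ := by
          rw [← ENNReal.ofReal_mul hs0.le]
          congr 1
          have : τ = R ^ (-(η / p)) * R ^ (η - θ) := by
            rw [← Real.rpow_add hR, hτ, hpq]; congr 1; ring
          rw [this, hs]
          field_simp
  have hsplit : u = (∫⁻ y in B ∩ S, f y * ENNReal.ofReal (d x y) ^ (-θ) ∂μ +
      ∫⁻ y in B \ S, f y * ENNReal.ofReal (d x y) ^ (-θ) ∂μ) +
      ∫⁻ y in Bᶜ, f y * ENNReal.ofReal (d x y) ^ (-θ) ∂μ := by
    rw [lintegral_inter_add_sdiff _ _ hSm, lintegral_add_compl _ hBm]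
  set N := ∫⁻ y in B ∩ S, f y * ENNReal.ofReal (d x y) ^ (-θ) ∂μ with hN
  have hNt : ENNReal.ofReal (2 * K₂ * τ) ≤ N := by
    have h1 : (t : ℝ≥0∞) ≤ N + ENNReal.ofReal (2 * K₂ * τ) := by
      refine ht.le.trans ?_
      rw [hsplit, hBc, add_assoc]
      have : ENNReal.ofReal (2 * K₂ * τ) = ENNReal.ofReal (K₂ * τ) + ENNReal.ofReal (K₂ * τ) := by
        rw [← ENNReal.ofReal_add (by positivity) (by positivity)]; congr 1; ring
      rw [this]
      gcongr
    have h2 : (t : ℝ≥0∞) = ENNReal.ofReal (2 * K₂ * τ) + ENNReal.ofReal (2 * K₂ * τ) := by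
      rw [htE, ← ENNReal.ofReal_add (by positivity) (by positivity)]; congr 1; ring
    rw [h2] at h1
    exact (ENNReal.add_le_add_iff_right ENNReal.ofReal_ne_top).1 h1
  have hNG : ENNReal.ofReal (τ ^ (q - 1)) * N ≤ G := by
    have hfD : Measurable fun y => f y * ENNReal.ofReal (d x y) ^ (-θ) := hf.mul hD
    rw [hN, ← lintegral_const_mul _ hfD]
    refine le_trans ?_ (setLIntegral_le_lintegral (B ∩ S) _)
    refine setLIntegral_mono' (hBm.inter hSm) fun y hy => ?_
    have hmin : ENNReal.ofReal τ ≤ min (ENNReal.ofReal (d x y) ^ (-(η / q)))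
        ((ENNReal.ofReal (K₁ / K₂) * f y) ^ (p / q)) := by
      refine le_min ?_ ?_
      · rw [hτ, ← ENNReal.ofReal_rpow_of_pos hR, ENNReal.rpow_neg, ENNReal.rpow_neg]
        exact ENNReal.inv_le_inv.2
          (ENNReal.rpow_le_rpow (ENNReal.ofReal_le_ofReal (le_of_lt hy.1)) hηq.le)
      · have h3 : ENNReal.ofReal (R ^ (-(η / p))) ≤ ENNReal.ofReal (K₁ / K₂) * f y := by
          calc ENNReal.ofReal (R ^ (-(η / p))) = ENNReal.ofReal (K₁ / K₂) * ENNReal.ofReal s := by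
                rw [← ENNReal.ofReal_mul (by positivity), hs]; congr 1; field_simp
            _ ≤ _ := by gcongr; exact le_of_lt hy.2
        refine le_trans (le_of_eq ?_) (ENNReal.rpow_le_rpow h3 (z := p / q) (by positivity))
        rw [ENNReal.ofReal_rpow_of_pos (by positivity), ← Real.rpow_mul hR.le, hτ]
        congr 2; field_simp
    calc ENNReal.ofReal (τ ^ (q - 1)) * (f y * ENNReal.ofReal (d x y) ^ (-θ))
        = f y * (ENNReal.ofReal (d x y) ^ (-θ) * ENNReal.ofReal τ ^ (q - 1)) := by
          rw [ENNReal.ofReal_rpow_of_pos hτ0]; ring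
      _ ≤ _ := by
          gcongr
  calc (t : ℝ≥0∞) ^ q
      = ENNReal.ofReal (2 * (4 * K₂) ^ (q - 1)) *
        (ENNReal.ofReal (τ ^ (q - 1)) * ENNReal.ofReal (2 * K₂ * τ)) := by
        rw [htE, ENNReal.ofReal_rpow_of_pos (by positivity), ← ENNReal.ofReal_mul (by positivity),
          ← ENNReal.ofReal_mul (by positivity)]
        congr 1
        rw [show q = (q - 1) + 1 by ring, Real.rpow_add_one (by positivity),
          Real.mul_rpow (by positivity) (by positivity)]
        ring_nf
    _ ≤ ENNReal.ofReal (2 * (4 * K₂) ^ (q - 1)) * (ENNReal.ofReal (τ ^ (q - 1)) * N) := by gcongr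
    _ ≤ _ := by gcongr

lemma kernel_bound {X : Type*} [MeasurableSpace X] (d : X → X → ℝ) (μ : Measure X)
    (hm : ∀ x, Measurable (d x)) (η : ℝ) (hη : 0 < η)
    (θ p q K₁ K C₃ : ℝ) (hp : 1 < p) (hq : 1 < q) (hK₁ : 0 < K₁) (hK : 0 < K) (hC₃ : 0 < C₃)
    (hpq : η / q = η / p - η + θ)
    (hnear : ∀ x R, 0 < R → ∫⁻ y in {y | d x y < R}, ENNReal.ofReal (d x y) ^ (-θ) ∂μ ≤
      ENNReal.ofReal (K₁ * R ^ (η - θ)))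
    (hfar : ∀ x R, 0 < R → ∫⁻ y in {y | R ≤ d x y},
        ENNReal.ofReal (d x y) ^ (-(θ + η - η / q)) ∂μ ≤
      ENNReal.ofReal (C₃ * R ^ (η - (θ + η - η / q)))) (x : X) (v : ℝ≥0∞) :
    v * ∫⁻ y, ENNReal.ofReal (d x y) ^ (-θ) *
        min (ENNReal.ofReal (d x y) ^ (-(η / q))) ((ENNReal.ofReal K * v) ^ (p / q))
          ^ (q - 1) ∂μ ≤ ENNReal.ofReal (K ^ (p / q * (q - 1)) * K₁ + C₃) * v ^ p := by
  have hq0 : 0 < q := by linarith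
  have hp0 : 0 < p := by linarith
  rcases eq_or_ne v 0 with rfl | hv0
  · simp
  rcases eq_or_ne v ⊤ with rfl | hvt
  · have hne : ENNReal.ofReal (K ^ (p / q * (q - 1)) * K₁ + C₃) ≠ 0 := by
      rw [Ne, ENNReal.ofReal_eq_zero, not_le]; positivity
    rw [ENNReal.top_rpow_of_pos hp0, ENNReal.mul_top hne]
    exact le_top
  obtain ⟨w, hw, rfl⟩ : ∃ w : ℝ, 0 < w ∧ v = ENNReal.ofReal w :=
    ⟨v.toReal, ENNReal.toReal_pos hv0 hvt, (ENNReal.ofReal_toReal hvt).symm⟩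
  set ρ := w ^ (-(p / η)) with hρ
  have hρ0 : 0 < ρ := by positivity
  set B := {y | d x y < ρ} with hB
  have hBm : MeasurableSet B := measurableSet_lt (hm x) measurable_const
  have hBc : Bᶜ = {y | ρ ≤ d x y} := by ext y; simp [hB]
  have hD : Measurable fun y => ENNReal.ofReal (d x y) ^ (-θ) :=
    (ENNReal.measurable_ofReal.comp (hm x)).pow_const _
  have e1 : p / q = 1 - p + p * θ / η := by
    have : p / q = p / η * (η / q) := by field_simp
    rw [this, hpq]; field_simp
  have hn : ∫⁻ y in B, ENNReal.ofReal (d x y) ^ (-θ) *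
        min (ENNReal.ofReal (d x y) ^ (-(η / q))) ((ENNReal.ofReal K * ENNReal.ofReal w) ^ (p / q))
          ^ (q - 1) ∂μ ≤ ENNReal.ofReal (K ^ (p / q * (q - 1)) * K₁ * w ^ (p - 1)) := by
    calc _ ≤ ∫⁻ y in B, ENNReal.ofReal (d x y) ^ (-θ) *
          ENNReal.ofReal ((K * w) ^ (p / q * (q - 1))) ∂μ := by
          refine lintegral_mono fun y => ?_
          dsimp only
          rw [← ENNReal.ofReal_rpow_of_pos (by positivity), ENNReal.ofReal_mul hK.le,
            ENNReal.rpow_mul]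
          refine mul_le_mul_right (ENNReal.rpow_le_rpow (min_le_right _ _) (by linarith)) _
      _ = (∫⁻ y in B, ENNReal.ofReal (d x y) ^ (-θ) ∂μ) *
          ENNReal.ofReal ((K * w) ^ (p / q * (q - 1))) := lintegral_mul_const _ hD
      _ ≤ ENNReal.ofReal (K₁ * ρ ^ (η - θ)) * ENNReal.ofReal ((K * w) ^ (p / q * (q - 1))) := by
          gcongr; exact hnear x ρ hρ0
      _ = _ := by
          rw [← ENNReal.ofReal_mul (by positivity)]
          congr 1
          have : w ^ (p - 1) = ρ ^ (η - θ) * w ^ (p / q * (q - 1)) := by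
            rw [hρ, ← Real.rpow_mul hw.le, ← Real.rpow_add hw]
            congr 1
            have : p / q * (q - 1) = p - p / q := by field_simp
            rw [this, e1]; field_simp; ring
          rw [Real.mul_rpow hK.le hw.le, this]; ring
  have hf : ∫⁻ y in Bᶜ, ENNReal.ofReal (d x y) ^ (-θ) *
        min (ENNReal.ofReal (d x y) ^ (-(η / q))) ((ENNReal.ofReal K * ENNReal.ofReal w) ^ (p / q))
          ^ (q - 1) ∂μ ≤ ENNReal.ofReal (C₃ * w ^ (p - 1)) := by
    calc _ ≤ ∫⁻ y in Bᶜ, ENNReal.ofReal (d x y) ^ (-(θ + η - η / q)) ∂μ := by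
          refine setLIntegral_mono' hBm.compl fun y hy => ?_
          rw [hBc] at hy
          have hd0 : 0 < d x y := lt_of_lt_of_le hρ0 hy
          have : -(θ + η - η / q) = -θ + -(η / q) * (q - 1) := by field_simp; ring
          rw [this, ENNReal.rpow_add _ _ (by simpa using hd0) ENNReal.ofReal_ne_top,
            ENNReal.rpow_mul]
          refine mul_le_mul_right (ENNReal.rpow_le_rpow (min_le_left _ _) (by linarith)) _
      _ ≤ ENNReal.ofReal (C₃ * ρ ^ (η - (θ + η - η / q))) := by
          rw [hBc]; exact hfar x ρ hρ0
      _ = _ := by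
          congr 2
          rw [hρ, ← Real.rpow_mul hw.le]
          congr 1
          have : -(p / η) * (η - (θ + η - η / q)) = p * θ / η - p / q := by field_simp; ring
          rw [this, e1]; ring
  rw [← lintegral_add_compl _ hBm]
  calc _ ≤ ENNReal.ofReal w * (ENNReal.ofReal (K ^ (p / q * (q - 1)) * K₁ * w ^ (p - 1)) +
        ENNReal.ofReal (C₃ * w ^ (p - 1))) := by gcongr
    _ = _ := by
      rw [← ENNReal.ofReal_add (by positivity) (by positivity), ← ENNReal.ofReal_mul hw.le,
        ENNReal.ofReal_rpow_of_pos hw, ← ENNReal.ofReal_mul (by positivity)]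
      congr 1
      have : w ^ p = w * w ^ (p - 1) := by
        rw [mul_comm, ← Real.rpow_add_one hw.ne']; congr 1; ring
      rw [this]; ring

lemma hls_normalized {X : Type*} [MeasurableSpace X] (d : X → X → ℝ) (μ : Measure X) [SFinite μ]
    (h0 : ∀ x y, 0 ≤ d x y) (hsymm : ∀ x y, d x y = d y x)
    (hdm : Measurable fun p : X × X => d p.1 p.2)
    (η A : ℝ) (hA : 0 < A) (hη : 0 < η)
    (hU : ∀ x r, 0 < r → μ {y | d x y < r} ≤ ENNReal.ofReal (A * r ^ η))
    (θ p q : ℝ) (hθ : 0 < θ) (hθη : θ < η) (hp : 1 < p) (hq : 1 < q)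
    (hpq : η / q = η / p - η + θ) :
    ∃ C : ℝ, 0 < C ∧ ∀ f : X → ℝ≥0∞, Measurable f → ∫⁻ y, f y ^ p ∂μ ≤ 1 →
      ∫⁻ x, (∫⁻ y, f y * ENNReal.ofReal (d x y) ^ (-θ) ∂μ) ^ q ∂μ ≤ ENNReal.ofReal C := by
  have hm : ∀ x, Measurable (d x) := fun x => hdm.comp measurable_prodMk_left
  have hq0 : 0 < q := by linarith
  have hp0 : 0 < p := by linarith
  obtain ⟨K₁, hK₁, hnear⟩ := near_bound d μ h0 hm η A hA hU θ hθ hθη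
  obtain ⟨K₂, hK₂, hfar⟩ := far_holder d μ hm η A hA hη hU θ p q hp hq0 hpq
  have hφ : η < θ + η - η / q := by
    have : η / p < η := div_lt_self hη hp
    linarith
  obtain ⟨C₃, hC₃, hfar3⟩ := far_bound d μ hm η A hA hη hU _ hφ
  set K := K₁ / K₂ with hK
  have hK0 : 0 < K := by positivity
  refine ⟨2 * (4 * K₂) ^ (q - 1) * (K ^ (p / q * (q - 1)) * K₁ + C₃), by positivity, ?_⟩
  intro f hf hf1
  have hDm : Measurable fun z : X × X => ENNReal.ofReal (d z.1 z.2) :=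
    ENNReal.measurable_ofReal.comp hdm
  have hgm : Measurable (Function.uncurry fun x y => f y * (ENNReal.ofReal (d x y) ^ (-θ) *
        min (ENNReal.ofReal (d x y) ^ (-(η / q))) ((ENNReal.ofReal K * f y) ^ (p / q))
          ^ (q - 1))) := by
    have hf2 : Measurable fun z : X × X => f z.2 := hf.comp measurable_snd
    exact hf2.mul ((hDm.pow_const _).mul
      (((hDm.pow_const _).min ((hf2.const_mul _).pow_const _)).pow_const _))
  calc ∫⁻ x, (∫⁻ y, f y * ENNReal.ofReal (d x y) ^ (-θ) ∂μ) ^ q ∂μ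
      ≤ ∫⁻ x, ENNReal.ofReal (2 * (4 * K₂) ^ (q - 1)) * ∫⁻ y, f y * (ENNReal.ofReal (d x y) ^ (-θ) *
        min (ENNReal.ofReal (d x y) ^ (-(η / q))) ((ENNReal.ofReal K * f y) ^ (p / q))
          ^ (q - 1)) ∂μ ∂μ := lintegral_mono fun x =>
        pointwise_bound d μ h0 hm η hη θ p q K₁ K₂ hp hq hK₁ hK₂ hpq hnear f hf
          (hfar f hf hf1) x
    _ = ENNReal.ofReal (2 * (4 * K₂) ^ (q - 1)) *
        ∫⁻ x, ∫⁻ y, f y * (ENNReal.ofReal (d x y) ^ (-θ) *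
        min (ENNReal.ofReal (d x y) ^ (-(η / q))) ((ENNReal.ofReal K * f y) ^ (p / q))
          ^ (q - 1)) ∂μ ∂μ := lintegral_const_mul _ hgm.lintegral_prod_right
    _ = ENNReal.ofReal (2 * (4 * K₂) ^ (q - 1)) *
        ∫⁻ y, ∫⁻ x, f y * (ENNReal.ofReal (d x y) ^ (-θ) *
        min (ENNReal.ofReal (d x y) ^ (-(η / q))) ((ENNReal.ofReal K * f y) ^ (p / q))
          ^ (q - 1)) ∂μ ∂μ := by rw [lintegral_lintegral_swap hgm.aemeasurable]
    _ ≤ ENNReal.ofReal (2 * (4 * K₂) ^ (q - 1)) *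
        ∫⁻ y, ENNReal.ofReal (K ^ (p / q * (q - 1)) * K₁ + C₃) * f y ^ p ∂μ := by
        refine mul_le_mul_right (lintegral_mono fun y => ?_) _
        have hDy : Measurable fun x => ENNReal.ofReal (d y x) :=
          ENNReal.measurable_ofReal.comp (hm y)
        simp_rw [fun x => hsymm x y]
        have hmm : Measurable fun x => ENNReal.ofReal (d y x) ^ (-θ) *
            min (ENNReal.ofReal (d y x) ^ (-(η / q))) ((ENNReal.ofReal K * f y) ^ (p / q))
              ^ (q - 1) := (hDy.pow_const _).mul
          (((hDy.pow_const _).min measurable_const).pow_const _)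
        rw [lintegral_const_mul _ hmm]
        exact kernel_bound d μ hm η hη θ p q K₁ K C₃ hp hq hK₁ hK0 hC₃ hpq hnear hfar3 y (f y)
    _ = ENNReal.ofReal (2 * (4 * K₂) ^ (q - 1)) *
        (ENNReal.ofReal (K ^ (p / q * (q - 1)) * K₁ + C₃) * ∫⁻ y, f y ^ p ∂μ) := by
        rw [lintegral_const_mul _ (hf.pow_const _)]
    _ ≤ ENNReal.ofReal (2 * (4 * K₂) ^ (q - 1)) *
        (ENNReal.ofReal (K ^ (p / q * (q - 1)) * K₁ + C₃) * 1) := by gcongr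
    _ = _ := by rw [mul_one, ← ENNReal.ofReal_mul (by positivity)]

lemma hls {X : Type*} [MeasurableSpace X] (d : X → X → ℝ) (μ : Measure X) [SFinite μ]
    (h0 : ∀ x y, 0 ≤ d x y) (hsymm : ∀ x y, d x y = d y x)
    (hdm : Measurable fun p : X × X => d p.1 p.2)
    (η A : ℝ) (hA : 0 < A) (hη : 0 < η)
    (hU : ∀ x r, 0 < r → μ {y | d x y < r} ≤ ENNReal.ofReal (A * r ^ η))
    (θ p q : ℝ) (hθ : 0 < θ) (hθη : θ < η) (hp : 1 < p) (hq : 1 < q)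
    (hpq : η / q = η / p - η + θ) :
    ∃ C : ℝ, 0 < C ∧ ∀ f : X → ℝ≥0∞, Measurable f →
      (∫⁻ x, (∫⁻ y, f y * ENNReal.ofReal (d x y) ^ (-θ) ∂μ) ^ q ∂μ) ^ (1 / q) ≤
        ENNReal.ofReal C * (∫⁻ y, f y ^ p ∂μ) ^ (1 / p) := by
  have hm : ∀ x, Measurable (d x) := fun x => hdm.comp measurable_prodMk_left
  have hq0 : 0 < q := by linarith
  have hp0 : 0 < p := by linarith
  obtain ⟨C, hC, hCb⟩ := hls_normalized d μ h0 hsymm hdm η A hA hη hU θ p q hθ hθη hp hq hpq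
  refine ⟨C ^ (1 / q), by positivity, ?_⟩
  intro f hf
  set M := (∫⁻ y, f y ^ p ∂μ) ^ (1 / p) with hM
  have hMp : ∫⁻ y, f y ^ p ∂μ = M ^ p := by
    rw [hM, ← ENNReal.rpow_mul, one_div_mul_cancel hp0.ne', ENNReal.rpow_one]
  rcases eq_or_ne M 0 with hM0 | hM0
  · rw [hM0, ENNReal.zero_rpow_of_pos hp0, lintegral_eq_zero_iff (hf.pow_const _)] at hMp
    have hz : ∀ x, ∫⁻ y, f y * ENNReal.ofReal (d x y) ^ (-θ) ∂μ = 0 := by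
      intro x
      rw [← lintegral_zero (μ := μ)]
      refine lintegral_congr_ae ?_
      filter_upwards [hMp] with y hy
      have : f y = 0 := by
        simpa [ENNReal.rpow_eq_zero_iff, hp0, not_lt.2 hp0.le] using hy
      simp [this]
    simp [hz, hq0]
  rcases eq_or_ne M ⊤ with hMt | hMt
  · rw [hMt, ENNReal.mul_top]
    · exact le_top
    · rw [Ne, ENNReal.ofReal_eq_zero, not_le]; positivity
  have hone : ∫⁻ y, (M⁻¹ * f y) ^ p ∂μ ≤ 1 := by
    simp_rw [ENNReal.mul_rpow_of_nonneg _ _ hp0.le]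
    rw [lintegral_const_mul _ (hf.pow_const _), hMp, ← ENNReal.mul_rpow_of_nonneg _ _ hp0.le,
      ENNReal.inv_mul_cancel hM0 hMt, ENNReal.one_rpow]
  have key := hCb (fun y => M⁻¹ * f y) (hf.const_mul _) hone
  have hDm : Measurable fun z : X × X => ENNReal.ofReal (d z.1 z.2) :=
    ENNReal.measurable_ofReal.comp hdm
  have hIm : Measurable fun x => ∫⁻ y, f y * ENNReal.ofReal (d x y) ^ (-θ) ∂μ := by
    have : Measurable (Function.uncurry fun x y => f y * ENNReal.ofReal (d x y) ^ (-θ)) :=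
      (hf.comp measurable_snd).mul (hDm.pow_const _)
    exact this.lintegral_prod_right
  have hI : ∀ x, ∫⁻ y, M⁻¹ * f y * ENNReal.ofReal (d x y) ^ (-θ) ∂μ =
      M⁻¹ * ∫⁻ y, f y * ENNReal.ofReal (d x y) ^ (-θ) ∂μ := by
    intro x
    simp_rw [mul_assoc]
    exact lintegral_const_mul _
      (hf.mul ((ENNReal.measurable_ofReal.comp (hm x)).pow_const _))
  simp_rw [hI, ENNReal.mul_rpow_of_nonneg _ _ hq0.le] at key
  rw [lintegral_const_mul _ (hIm.pow_const _)] at key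
  have key2 := ENNReal.rpow_le_rpow key (z := 1 / q) (by positivity)
  rw [ENNReal.mul_rpow_of_nonneg _ _ (by positivity), ← ENNReal.rpow_mul,
    mul_one_div_cancel hq0.ne', ENNReal.rpow_one, ENNReal.ofReal_rpow_of_pos hC] at key2
  rwa [mul_comm M⁻¹, ← div_eq_mul_inv, ENNReal.div_le_iff hM0 hMt] at key2

/-- Case `C_σ`: `‖I_{η-γ/2}(g · I_{η-γ/2}f)‖_{p₃} ≤ C ‖f‖_{p₁} ‖g‖_{p₂}` when
`σ < 1/p₁ < 1`, `0 < 1/p₂ < 1`, `2σ < 1/p₁ + 1/p₂ < 1 + σ` and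
`1/p₃ = 1/p₁ + 1/p₂ - 2σ`, with `σ = (2η-γ)/(2η)`. -/
theorem statement3 {X : Type*} [MeasurableSpace X]
    (d : X → X → ℝ) (κ : ℝ) (hκ : 1 ≤ κ) (hqm : IsQuasiMetric d κ)
    (hd_meas : Measurable fun p : X × X => d p.1 p.2)
    (μ : Measure X) (η : ℝ) (hη : 0 < η)
    (a A : ℝ) (ha : 0 < a) (haA : a ≤ A) (hAhl : IsAhlfors d μ η a A)
    (γ : ℝ) (hγ0 : 0 < γ) (hγ2η : γ < 2 * η)
    (σ : ℝ) (hσ : σ = (2 * η - γ) / (2 * η))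
    (p₁ p₂ p₃ : ℝ)
    (hp₁l : σ < 1 / p₁) (hp₁u : 1 / p₁ < 1)
    (hp₂l : 0 < 1 / p₂) (hp₂u : 1 / p₂ < 1)
    (hsum_l : 2 * σ < 1 / p₁ + 1 / p₂) (hsum_u : 1 / p₁ + 1 / p₂ < 1 + σ)
    (hp₃ : 1 / p₃ = 1 / p₁ + 1 / p₂ - 2 * σ) :
    ∃ C : ℝ, 0 < C ∧ ∀ f g : X → ℝ≥0∞, Measurable f → Measurable g →
      lpNorm μ p₁ f ≠ ⊤ → lpNorm μ p₂ g ≠ ⊤ →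
      lpNorm μ p₃
          (fracInt d μ (η - γ / 2) η
            (fun x => g x * fracInt d μ (η - γ / 2) η f x)) ≤
        ENNReal.ofReal C * lpNorm μ p₁ f * lpNorm μ p₂ g := by
  obtain ⟨h0, -, hsymm, -⟩ := hqm
  have hA : 0 < A := ha.trans_le haA
  have hU : ∀ x r, 0 < r → μ {y | d x y < r} ≤ ENNReal.ofReal (A * r ^ η) :=
    fun x r hr => (hAhl x r hr).2
  have hsf : SigmaFinite μ := by
    rcases isEmpty_or_nonempty X with hX | ⟨⟨x₀⟩⟩
    · rw [Measure.eq_zero_of_isEmpty μ]; infer_instance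
    · refine ⟨⟨⟨fun n : ℕ => {y | d x₀ y < (n : ℝ) + 1}, fun n => trivial, fun n => ?_, ?_⟩⟩⟩
      · exact (hU x₀ _ (by positivity)).trans_lt ENNReal.ofReal_lt_top
      · refine Set.eq_univ_of_forall fun y => Set.mem_iUnion.2 ?_
        obtain ⟨n, hn⟩ := exists_nat_gt (d x₀ y)
        exact ⟨n, by simp only [Set.mem_ofPred_eq]; linarith⟩
  have hσ0 : 0 < σ := by rw [hσ]; apply div_pos <;> linarith
  have hησ : η * σ = η - γ / 2 := by rw [hσ]; field_simp
  have hp₁0 : 0 < p₁ := one_div_pos.1 (hσ0.trans hp₁l)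
  have hp₂0 : 0 < p₂ := one_div_pos.1 hp₂l
  have hp₁1 : 1 < p₁ := by rwa [div_lt_one hp₁0] at hp₁u
  have inv_gt : ∀ r : ℝ, 0 < r → r < 1 → 1 < 1 / r := fun r h1 h2 => one_lt_one_div h1 h2
  -- the intermediate exponents
  obtain ⟨q, hqdef⟩ : ∃ q, q = 1 / (1 / p₁ - σ) := ⟨_, rfl⟩
  obtain ⟨s, hsdef⟩ : ∃ s, s = 1 / (1 / p₁ + 1 / p₂ - σ) := ⟨_, rfl⟩
  have hq : 1 < q := by rw [hqdef]; exact inv_gt _ (by linarith) (by linarith)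
  have hs : 1 < s := by rw [hsdef]; exact inv_gt _ (by linarith) (by linarith)
  have hqi : 1 / q = 1 / p₁ - σ := by rw [hqdef, one_div_one_div]
  have hsi : 1 / s = 1 / p₁ + 1 / p₂ - σ := by rw [hsdef, one_div_one_div]
  have hp₃1 : 1 < p₃ := by
    rw [← one_div_one_div p₃]
    exact inv_gt _ (by linarith) (by linarith)
  have e1 : η / q = η / p₁ - η + γ / 2 := by
    rw [← mul_one_div, hqi, ← mul_one_div η p₁]; linarith
  have e2 : η / p₃ = η / s - η + γ / 2 := by
    rw [← mul_one_div, hp₃, ← mul_one_div η s, hsi]; linarith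
  obtain ⟨C₁, hC₁, H₁⟩ := hls d μ h0 hsymm hd_meas η A hA hη hU (γ / 2) p₁ q (by linarith)
    (by linarith) hp₁1 hq e1
  obtain ⟨C₂, hC₂, H₂⟩ := hls d μ h0 hsymm hd_meas η A hA hη hU (γ / 2) s p₃ (by linarith)
    (by linarith) hs hp₃1 e2
  refine ⟨C₂ * C₁, by positivity, fun f g hf hg _ _ => ?_⟩
  have hexp : η - γ / 2 - η = -(γ / 2) := by ring
  have hFm : Measurable fun x => ∫⁻ y, f y * ENNReal.ofReal (d x y) ^ (-(γ / 2)) ∂μ := by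
    have : Measurable (Function.uncurry fun x y => f y * ENNReal.ofReal (d x y) ^ (-(γ / 2))) :=
      (hf.comp measurable_snd).mul ((ENNReal.measurable_ofReal.comp hd_meas).pow_const _)
    exact this.lintegral_prod_right
  unfold _root_.lpNorm fracInt
  simp only [hexp]
  have hsp : s < p₂ := by
    rw [← one_div_lt_one_div hp₂0 (by linarith)]; linarith
  have hH := ENNReal.lintegral_Lp_mul_le_Lq_mul_Lr (p := s) (q := p₂) (r := q) (by linarith) hsp
    (by linarith) μ hg.aemeasurable hFm.aemeasurable
  refine (H₂ _ (hg.mul hFm)).trans ?_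
  refine (mul_le_mul_right (hH.trans (mul_le_mul_right (H₁ f hf) _)) _).trans (le_of_eq ?_)
  rw [ENNReal.ofReal_mul hC₂.le]
  ring
end
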